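/- arXiv:1212.1134 — 7 statements merged into one kernel-verified Lean document; each statement's English description precedes it below -/
import Mathlib

section
/- For all j, k ≥ 0 one has 𝔖(𝔗_{2j}(X)·𝔗_k(X)) = (D_j/D_{j−1})·δ_{2j+1,k}, where δ is the Kronecker delta. In particular 𝔖(𝔗_0·𝔗_0) = 0. -/
open Polynomial MeasureTheory

/-!
Let `L : X ^ n ↦ s n` be the moment functional. By linearity `𝔖 (q(X²)) = 0` and
`𝔖 (X * q(X²)) = L q`, so `𝔖 (𝔗_{2j} * 𝔗_{2k}) = 0` and `𝔖 (𝔗_{2j} * 𝔗_{2k+1}) = L (P_j * P_k)`,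
which vanishes for `j ≠ k`. The squared norm `L (P_j ^ 2)` equals `L (P_j * X ^ j)`. The Hankel
matrix of order `j + 1` maps the coefficient vector of `P_j`, whose last entry is `1`, to the vector
`(L (P_j * X ^ i))_i`, which is supported in the last entry. By Cramer's rule `L (P_j * X ^ j)` is
then the quotient of two consecutive Hankel determinants.
-/

section CommSemiring

variable {R : Type*} [CommSemiring R]

/-- The moment functional of a sequence `s`: the linear functional on polynomials that sends `X ^ n`
to `s n`. -/
noncomputable def momentFunctional (s : ℕ → R) : R[X] →ₗ[R] R :=
  (basisMonomials R).constr R s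

/-- The Hankel matrix `(s (i + k))` of size `n`, with indices `0 ≤ i, k < n`. Its determinant is
the Hankel determinant usually written `D_{n-1}`. -/
def hankel (s : ℕ → R) (n : ℕ) : Matrix (Fin n) (Fin n) R :=
  Matrix.of fun i k => s (i + k)

/-- `p` is a monic orthogonal polynomial of degree `n` for the moment sequence `s`. -/
structure IsMonicOrthogonal (s : ℕ → R) (n : ℕ) (p : R[X]) : Prop where
  monic : p.Monic
  natDegree_eq : p.natDegree = n
  orthogonal : ∀ k < n, momentFunctional s (p * X ^ k) = 0

variable {s : ℕ → R} {n : ℕ} {p q : R[X]}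

lemma momentFunctional_monomial (s : ℕ → R) (n : ℕ) (a : R) :
    momentFunctional s (monomial n a) = a * s n := by
  have map_basis : momentFunctional s (monomial n 1) = s n := by
    simpa only [momentFunctional, coe_basisMonomials] using (basisMonomials R).constr_basis R s n
  rw [← mul_one a, ← smul_eq_mul, ← smul_monomial, map_smul, map_basis, smul_eq_mul, smul_eq_mul,
    mul_one]

lemma momentFunctional_zero : momentFunctional (0 : ℕ → R) = 0 :=
  map_zero ((basisMonomials R).constr R)

lemma map_X_pow_mul_comp_X_pow (S : R[X] →ₗ[R] R) (m r : ℕ) (q : R[X]) :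
    S (X ^ r * q.comp (X ^ m)) = momentFunctional (fun n => S (X ^ (m * n + r))) q := by
  induction q using Polynomial.induction_on' with
  | add p q hp hq => rw [add_comp, mul_add, map_add, map_add, hp, hq]
  | monomial n a =>
    rw [momentFunctional_monomial, monomial_comp, ← smul_eq_C_mul, mul_smul_comm, map_smul,
      smul_eq_mul, ← pow_mul, ← pow_add, add_comm r]

lemma hankel_mulVec_coeff_apply (s : ℕ → R) (hp : p.natDegree < n) (i : Fin n) :
    (hankel s n).mulVec (fun k => p.coeff k) i = momentFunctional s (p * X ^ (i : ℕ)) := by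
  conv_rhs => rw [p.as_sum_range' n hp, Finset.sum_mul, map_sum, ← Fin.sum_univ_eq_sum_range
    (fun k => momentFunctional s (monomial k (p.coeff k) * X ^ (i : ℕ)))]
  simp only [Matrix.mulVec, dotProduct]
  refine Finset.sum_congr rfl fun k _ => ?_
  rw [monomial_mul_X_pow, momentFunctional_monomial, hankel, Matrix.of_apply, mul_comm, add_comm]

namespace IsMonicOrthogonal

lemma coeff_self (hp : IsMonicOrthogonal s n p) : p.coeff n = 1 := by
  simpa only [hp.natDegree_eq] using hp.monic.coeff_natDegree

lemma momentFunctional_mul_eq_coeff_mul (hp : IsMonicOrthogonal s n p) (hq : q.natDegree ≤ n) :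
    momentFunctional s (p * q) = q.coeff n * momentFunctional s (p * X ^ n) := by
  have mul_monomial (k : ℕ) (a : R) :
      momentFunctional s (p * monomial k a) = a * momentFunctional s (p * X ^ k) := by
    rw [← smul_X_eq_monomial, mul_smul_comm, map_smul, smul_eq_mul]
  conv_lhs => rw [q.as_sum_range' (n + 1) (Nat.lt_succ_of_le hq), Finset.mul_sum, map_sum,
    Finset.sum_range_succ, mul_monomial]
  rw [Finset.sum_eq_zero, zero_add]
  intro k hk
  rw [mul_monomial, hp.orthogonal k (Finset.mem_range.1 hk), mul_zero]

lemma momentFunctional_mul_eq_zero (hp : IsMonicOrthogonal s n p) (hq : q.natDegree < n) :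
    momentFunctional s (p * q) = 0 := by
  rw [hp.momentFunctional_mul_eq_coeff_mul hq.le, coeff_eq_zero_of_natDegree_lt hq, zero_mul]

lemma momentFunctional_mul_self (hp : IsMonicOrthogonal s n p) :
    momentFunctional s (p * p) = momentFunctional s (p * X ^ n) := by
  rw [hp.momentFunctional_mul_eq_coeff_mul hp.natDegree_eq.le, hp.coeff_self, one_mul]

lemma hankel_mulVec_coeff (hp : IsMonicOrthogonal s n p) :
    (hankel s (n + 1)).mulVec (fun k => p.coeff k) =
      Pi.single (Fin.last n) (momentFunctional s (p * p)) := by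
  ext i
  rw [hankel_mulVec_coeff_apply s (Nat.lt_succ_of_le hp.natDegree_eq.le)]
  obtain rfl | hi := eq_or_ne i (Fin.last n)
  · rw [Pi.single_eq_same, Fin.val_last, hp.momentFunctional_mul_self]
  · rw [Pi.single_eq_of_ne hi, hp.orthogonal i (Fin.val_lt_last hi)]

end IsMonicOrthogonal

end CommSemiring

section CommRing

variable {R : Type*} [CommRing R] {s : ℕ → R} {n : ℕ} {p : R[X]}

lemma det_mul_apply_of_mulVec_eq_single {ι : Type*} [Fintype ι] [DecidableEq ι]
    {A : Matrix ι ι R} {v : ι → R} {i : ι} {a : R} (h : A.mulVec v = Pi.single i a) :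
    A.det * v i = A.adjugate i i * a := by
  have adjugate_mulVec : A.adjugate.mulVec (Pi.single i a) = A.det • v := by
    rw [← h, Matrix.mulVec_mulVec, Matrix.adjugate_mul, Matrix.smul_mulVec, Matrix.one_mulVec]
  simpa [Matrix.mulVec_single] using (congrFun adjugate_mulVec i).symm

lemma adjugate_hankel_last (s : ℕ → R) (n : ℕ) :
    (hankel s (n + 1)).adjugate (Fin.last n) (Fin.last n) = (hankel s n).det := by
  rw [Matrix.adjugate_fin_succ_eq_det_submatrix, Fin.val_last, Even.neg_one_pow ⟨n, rfl⟩, one_mul,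
    Fin.succAbove_last]
  rfl

lemma IsMonicOrthogonal.det_hankel_succ (hp : IsMonicOrthogonal s n p) :
    (hankel s (n + 1)).det = (hankel s n).det * momentFunctional s (p * p) := by
  simpa only [Fin.val_last, hp.coeff_self, mul_one, adjugate_hankel_last] using
    det_mul_apply_of_mulVec_eq_single hp.hankel_mulVec_coeff

end CommRing

lemma momentFunctional_mul_of_isMonicOrthogonal {K : Type*} [Field K] {s : ℕ → K}
    (hs : ∀ n, (hankel s n).det ≠ 0) {P : ℕ → K[X]} (hP : ∀ n, IsMonicOrthogonal s n (P n))
    (j k : ℕ) :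
    momentFunctional s (P j * P k) =
      if j = k then (hankel s (j + 1)).det / (hankel s j).det else 0 := by
  obtain h | rfl | h := lt_trichotomy j k
  · rw [if_neg h.ne, mul_comm,
      (hP k).momentFunctional_mul_eq_zero ((hP j).natDegree_eq.trans_lt h)]
  · rw [if_pos rfl, (hP j).det_hankel_succ, mul_div_cancel_left₀ _ (hs j)]
  · rw [if_neg h.ne', (hP j).momentFunctional_mul_eq_zero ((hP k).natDegree_eq.trans_lt h)]

lemma integral_eval_eq_momentFunctional {𝕜 : Type*} [RCLike 𝕜] {μ : Measure 𝕜}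
    (hint : ∀ n : ℕ, Integrable (fun t : 𝕜 => t ^ n) μ) (q : 𝕜[X]) :
    ∫ t, q.eval t ∂μ = momentFunctional (fun n => ∫ t, t ^ n ∂μ) q := by
  conv_rhs => rw [q.as_sum_range, map_sum]
  simp only [eval_eq_sum_range, momentFunctional_monomial]
  rw [integral_finsetSum _ fun n _ => (hint n).const_mul _]
  simp only [integral_const_mul]

lemma isMonicOrthogonal_of_integral_eq_zero {𝕜 : Type*} [RCLike 𝕜] {μ : Measure 𝕜}
    (hint : ∀ n : ℕ, Integrable (fun t : 𝕜 => t ^ n) μ) {n : ℕ} {p : 𝕜[X]} (hp : p.Monic)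
    (hdeg : p.natDegree = n) (horth : ∀ k < n, ∫ t, p.eval t * t ^ k ∂μ = 0) :
    IsMonicOrthogonal (fun j => ∫ t, t ^ j ∂μ) n p where
  monic := hp
  natDegree_eq := hdeg
  orthogonal k hk := by
    simpa only [← integral_eval_eq_momentFunctional hint, eval_mul, eval_pow, eval_X] using
      horth k hk

theorem stmt_0_general {K : Type*} [Field K] (s : ℕ → K) (hs : ∀ n, (hankel s n).det ≠ 0)
    (P : ℕ → K[X]) (hP : ∀ n, IsMonicOrthogonal s n (P n))
    (S : K[X] →ₗ[K] K) (hSeven : ∀ j, S (X ^ (2 * j)) = 0)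
    (hSodd : ∀ j, S (X ^ (2 * j + 1)) = s j)
    (T : ℕ → K[X]) (hTeven : ∀ j, T (2 * j) = (P j).comp (X ^ 2))
    (hTodd : ∀ j, T (2 * j + 1) = X * (P j).comp (X ^ 2)) (j k : ℕ) :
    S (T (2 * j) * T k) =
      (hankel s (j + 1)).det / (hankel s j).det * (if 2 * j + 1 = k then 1 else 0) := by
  have S_even (q : K[X]) : S (q.comp (X ^ 2)) = 0 := by
    simpa [hSeven, ← Pi.zero_def, momentFunctional_zero] using
      map_X_pow_mul_comp_X_pow S 2 0 q
  have S_odd (q : K[X]) : S (X * q.comp (X ^ 2)) = momentFunctional s q := by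
    simpa only [pow_one, hSodd] using map_X_pow_mul_comp_X_pow S 2 1 q
  obtain ⟨m, rfl | rfl⟩ := Nat.even_or_odd' k
  · rw [hTeven, hTeven, ← mul_comp, S_even, if_neg (by lia), mul_zero]
  · rw [hTeven, hTodd, mul_left_comm, ← mul_comp, S_odd,
      momentFunctional_mul_of_isMonicOrthogonal hs hP]
    simp only [add_left_inj, mul_right_inj' two_ne_zero, mul_ite, mul_one, mul_zero]

/-- For all `j, k ≥ 0` one has
`𝔖(𝔗_{2j}·𝔗_k) = (D_j / D_{j-1}) · δ_{2j+1,k}`.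
Here `D (n+1)` is the Hankel determinant of order `n` and `D 0 = 1` plays the
role of `D_{-1}`. -/
theorem stmt_0
    (μ : Measure ℝ) [IsProbabilityMeasure μ]
    (hint : ∀ j : ℕ, Integrable (fun t : ℝ => t ^ j) μ)
    (s : ℕ → ℝ) (hs : ∀ j, s j = ∫ t, t ^ j ∂μ)
    (D : ℕ → ℝ) (hD0 : D 0 = 1)
    (hD : ∀ n : ℕ, D (n + 1) = (Matrix.of fun i k : Fin (n + 1) => s (i.1 + k.1)).det)
    (hDpos : ∀ n, 0 < D n)
    (P : ℕ → Polynomial ℝ)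
    (hPmonic : ∀ j, (P j).Monic) (hPdeg : ∀ j, (P j).natDegree = j)
    (hPorth : ∀ j k : ℕ, k < j → ∫ t, (P j).eval t * t ^ k ∂μ = 0)
    (S : Polynomial ℝ →ₗ[ℝ] ℝ)
    (hSeven : ∀ j : ℕ, S (X ^ (2 * j)) = 0)
    (hSodd : ∀ j : ℕ, S (X ^ (2 * j + 1)) = s j)
    (T : ℕ → Polynomial ℝ)
    (hTeven : ∀ j, T (2 * j) = (P j).comp (X ^ 2))
    (hTodd : ∀ j, T (2 * j + 1) = X * (P j).comp (X ^ 2)) :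
    ∀ j k : ℕ, S (T (2 * j) * T k) = (D (j + 1) / D j) * (if 2 * j + 1 = k then 1 else 0) := by
  obtain rfl : s = fun j => ∫ t, t ^ j ∂μ := funext hs
  obtain rfl : D = fun n => (hankel (fun j => ∫ t, t ^ j ∂μ) n).det := funext fun
    | 0 => by rw [hD0, Matrix.det_fin_zero]
    | n + 1 => hD n
  exact stmt_0_general _ (fun n => (hDpos n).ne') P
    (fun n => isMonicOrthogonal_of_integral_eq_zero hint (hPmonic n) (hPdeg n) (hPorth n))
    S hSeven hSodd T hTeven hTodd
end

section
/- Define u_n = −P_{n+1}(0)/P_n(0) for n ≥ 0 (well defined since P_n(0) ≠ 0), l_0 = 0 and l_{n+1} = c_n/u_n. Then for all n ≥ 0: u_n > 0, l_{n+1} > 0, b_n = u_n + l_n, and c_n = l_{n+1}·u_n. (These identities express the LU factorization J = LU of the monic Jacobi matrix J with diagonal b_n, superdiagonal 1 and subdiagonal c_n, where L is unit lower bidiagonal with subdiagonal l_{n+1} and U is upper bidiagonal with diagonal u_n and superdiagonal 1.) -/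
open Polynomial MeasureTheory

/-!
The values `p n = P n (x)` at a point form a formal eigenvector of the monic Jacobi matrix `J`, with
eigenvalue `x`. A factorization `J - x = L U` in which `U` annihilates `p` must have
`u n = -p (n + 1) / p n`. The subdiagonal of `L` is then forced by `c n = l (n + 1) * u n`, and row
`n` of `(J - x) p = 0` identifies the diagonal. When the signs of `p` alternate, all pivots `u n`
are positive; for polynomials orthogonal on the positive half-line this happens at `x = 0`.
-/

/-- `p` is a formal eigenvector, with eigenvalue `x`, of the monic Jacobi matrix with diagonal `b`,
superdiagonal `1` and subdiagonal `c`. A sequence of polynomials satisfying a three-term recurrence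
is the case `x = X`, with constant polynomials as entries of the matrix. -/
structure IsJacobiEigenvector {R : Type*} [Semiring R] (b c p : ℕ → R) (x : R) : Prop where
  zero : x * p 0 = p 1 + b 0 * p 0
  succ : ∀ n, x * p (n + 1) = p (n + 2) + b (n + 1) * p (n + 1) + c n * p n

namespace IsJacobiEigenvector

theorem map {R S : Type*} [Semiring R] [Semiring S] {b c p : ℕ → R} {x : R}
    (h : IsJacobiEigenvector b c p x) (f : R →+* S) :
    IsJacobiEigenvector (fun n => f (b n)) (fun n => f (c n)) (fun n => f (p n)) (f x) where
  zero := by simpa only [map_add, map_mul] using congrArg f h.zero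
  succ n := by simpa only [map_add, map_mul] using congrArg f (h.succ n)

theorem eval {R : Type*} [CommSemiring R] {b c : ℕ → R} {P : ℕ → R[X]}
    (h : IsJacobiEigenvector (fun n => C (b n)) (fun n => C (c n)) P X) (x : R) :
    IsJacobiEigenvector b c (fun n => (P n).eval x) x := by
  simpa only [coe_evalRingHom, eval_C, eval_X] using h.map (evalRingHom x)

theorem diagonal_sub_eq_add {R : Type*} [CommRing R] [IsCancelMulZero R]
    {b c p u l : ℕ → R} {x : R} (h : IsJacobiEigenvector b c p x)
    (hup : ∀ n, u n * p n + p (n + 1) = 0) (hl0 : l 0 = 0) (hlu : ∀ n, c n = l (n + 1) * u n)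
    {n : ℕ} (hp : p n ≠ 0) : b n - x = u n + l n := by
  apply mul_right_cancel₀ hp
  cases n with
  | zero => linear_combination -h.zero - hup 0 - p 0 * hl0
  | succ m =>
    have hsub : c m * p m = -(l (m + 1) * p (m + 1)) := by
      linear_combination p m * hlu m + l (m + 1) * hup m
    linear_combination -h.succ m - hup (m + 1) - hsub

end IsJacobiEigenvector

theorem neg_div_pos_of_alternating {K : Type*} [Field K] [LinearOrder K] [IsStrictOrderedRing K]
    {p : ℕ → K} (hp : ∀ n, 0 < (-1) ^ n * p n) (n : ℕ) : 0 < -p (n + 1) / p n := by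
  have hsign : (-1 : K) ^ n ≠ 0 := pow_ne_zero n (neg_ne_zero.mpr one_ne_zero)
  calc
    0 < (-1) ^ (n + 1) * p (n + 1) / ((-1) ^ n * p n) := div_pos (hp (n + 1)) (hp n)
    _ = -p (n + 1) / p n := by
      rw [pow_succ, mul_assoc, neg_one_mul, mul_div_mul_left _ _ hsign]

theorem stmt_4_general {K : Type*} [Field K] [LinearOrder K] [IsStrictOrderedRing K]
    {b c p u l : ℕ → K} {x : K} (h : IsJacobiEigenvector b c p x) (hc : ∀ n, 0 < c n)
    (hp : ∀ n, 0 < (-1) ^ n * p n) (hu : ∀ n, u n = -p (n + 1) / p n)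
    (hl0 : l 0 = 0) (hl : ∀ n, l (n + 1) = c n / u n) (n : ℕ) :
    0 < u n ∧ 0 < l (n + 1) ∧ b n - x = u n + l n ∧ c n = l (n + 1) * u n := by
  have hp_ne : ∀ n, p n ≠ 0 := fun n => right_ne_zero_of_mul (hp n).ne'
  have hu_pos : ∀ n, 0 < u n := fun n => hu n ▸ neg_div_pos_of_alternating hp n
  have hup : ∀ n, u n * p n + p (n + 1) = 0 := fun n => by
    rw [hu, div_mul_cancel₀ _ (hp_ne n), neg_add_cancel]
  have hlu : ∀ n, c n = l (n + 1) * u n := fun n => by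
    rw [hl, div_mul_cancel₀ _ (hu_pos n).ne']
  exact ⟨hu_pos n, hl n ▸ div_pos (hc n) (hu_pos n),
    h.diagonal_sub_eq_add hup hl0 hlu (hp_ne n), hlu n⟩

/-- with `u_n = -P_{n+1}(0)/P_n(0)`, `l_0 = 0`, `l_{n+1} = c_n/u_n`,
one has `u_n > 0`, `l_{n+1} > 0`, `b_n = u_n + l_n` and `c_n = l_{n+1}·u_n`
(the LU factorization `J = LU` of the monic Jacobi matrix). -/
theorem stmt_4
    (μ : Measure ℝ) [IsProbabilityMeasure μ]
    (hsupp : ∀ᵐ t ∂μ, 0 ≤ t)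
    (hint : ∀ j : ℕ, Integrable (fun t : ℝ => t ^ j) μ)
    (s : ℕ → ℝ) (hs : ∀ j, s j = ∫ t, t ^ j ∂μ)
    (hDpos : ∀ n : ℕ, 0 < (Matrix.of fun i k : Fin (n + 1) => s (i.1 + k.1)).det)
    (P : ℕ → Polynomial ℝ)
    (hPmonic : ∀ j, (P j).Monic) (hPdeg : ∀ j, (P j).natDegree = j)
    (hPorth : ∀ j k : ℕ, k < j → ∫ t, (P j).eval t * t ^ k ∂μ = 0)
    (b c : ℕ → ℝ) (hc : ∀ j, 0 < c j)
    (hrec0 : X * P 0 = P 1 + C (b 0) * P 0)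
    (hrec : ∀ j : ℕ, X * P (j + 1) = P (j + 2) + C (b (j + 1)) * P (j + 1) + C (c j) * P j)
    (hP0 : ∀ j : ℕ, 0 < (-1 : ℝ) ^ j * (P j).eval 0)
    (u : ℕ → ℝ) (hu : ∀ n, u n = -((P (n + 1)).eval 0) / (P n).eval 0)
    (l : ℕ → ℝ) (hl0 : l 0 = 0) (hl : ∀ n, l (n + 1) = c n / u n) :
    ∀ n : ℕ, 0 < u n ∧ 0 < l (n + 1) ∧ b n = u n + l n ∧ c n = l (n + 1) * u n := by
  simpa only [sub_zero] using
    stmt_4_general (IsJacobiEigenvector.eval ⟨hrec0, hrec⟩ 0) hc hP0 hu hl0 hl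
end

section
/- For every z ∈ ℂ with Im z > 0 one has Im(z·∫ (t − z²)^{−1} dμ(t)) > 0; that is, the unwrapping λ ↦ λ·S(λ²) of the Stieltjes function S(λ) = ∫ (t − λ)^{−1} dμ(t) maps the open upper half-plane into itself, i.e. it is a Nevanlinna function. -/
/-!
Write `z * (t - z ^ 2)⁻¹ = (-(z - t / z))⁻¹`. For `t ≥ 0`, the map `z ↦ z - t / z` sends the upper
half-plane into itself, and so does `w ↦ (-w)⁻¹`; the integrand therefore has positive imaginary
part. Moreover the imaginary part of `z - t / z` grows linearly in `t`, which bounds the integrand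
by a multiple of `(1 + t)⁻¹`.
-/

open Polynomial MeasureTheory

lemma mul_inv_sub_sq_eq_inv_neg {K : Type*} [Field K] (t z : K) :
    z * (t - z ^ 2)⁻¹ = (-(z - t / z))⁻¹ := by
  rcases eq_or_ne z 0 with rfl | hz
  · simp
  · have hdiv : -(z - t / z) = (t - z ^ 2) / z := by
      field_simp
      ring
    rw [hdiv, inv_div, div_eq_mul_inv]

lemma im_sub_ofReal_div (t : ℝ) (z : ℂ) :
    (z - t / z).im = z.im * (1 + t / Complex.normSq z) := by
  rw [Complex.sub_im, div_eq_mul_inv, Complex.im_ofReal_mul, Complex.inv_im]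
  ring

lemma im_sub_ofReal_div_pos {t : ℝ} {z : ℂ} (ht : 0 ≤ t) (hz : 0 < z.im) :
    0 < (z - t / z).im := by
  have hN : 0 ≤ Complex.normSq z := Complex.normSq_nonneg z
  rw [im_sub_ofReal_div]
  positivity

lemma im_mul_inv_ofReal_sub_sq_pos {t : ℝ} {z : ℂ} (ht : 0 ≤ t) (hz : 0 < z.im) :
    0 < (z * ((t : ℂ) - z ^ 2)⁻¹).im := by
  rw [mul_inv_sub_sq_eq_inv_neg]
  exact UpperHalfPlane.im_inv_neg_coe_pos ⟨z - t / z, im_sub_ofReal_div_pos ht hz⟩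

lemma one_add_le_max_one_mul_one_add_div {t N : ℝ} (ht : 0 ≤ t) (hN : 0 < N) :
    1 + t ≤ max 1 N * (1 + t / N) :=
  calc
    1 + t = 1 * 1 + N * (t / N) := by rw [mul_div_cancel₀ t hN.ne', one_mul]
    _ ≤ max 1 N * 1 + max 1 N * (t / N) := by
      gcongr
      exacts [le_max_left 1 N, le_max_right 1 N]
    _ = max 1 N * (1 + t / N) := (mul_add _ _ _).symm

lemma norm_mul_inv_ofReal_sub_sq_le {t : ℝ} {z : ℂ} (ht : 0 ≤ t) (hz : 0 < z.im) :
    ‖z * ((t : ℂ) - z ^ 2)⁻¹‖ ≤ max 1 (Complex.normSq z) / z.im * (1 + t)⁻¹ := by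
  have hN : 0 < Complex.normSq z := Complex.normSq_pos.2 fun h => by simp [h] at hz
  have him : (1 + t) * (z.im / max 1 (Complex.normSq z)) ≤ (z - t / z).im :=
    calc
      (1 + t) * (z.im / max 1 (Complex.normSq z))
        ≤ max 1 (Complex.normSq z) * (1 + t / Complex.normSq z) *
            (z.im / max 1 (Complex.normSq z)) := by
          gcongr
          exact one_add_le_max_one_mul_one_add_div ht hN
      _ = (z - t / z).im := by
          rw [im_sub_ofReal_div]
          field_simp
  calc
    ‖z * ((t : ℂ) - z ^ 2)⁻¹‖ = ‖z - t / z‖⁻¹ := by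
      rw [mul_inv_sub_sq_eq_inv_neg, norm_inv, norm_neg]
    _ ≤ ((1 + t) * (z.im / max 1 (Complex.normSq z)))⁻¹ := by
      gcongr
      exact him.trans ((le_abs_self _).trans (Complex.abs_im_le_norm _))
    _ = max 1 (Complex.normSq z) / z.im * (1 + t)⁻¹ := by rw [mul_inv_rev, inv_div]

lemma integrable_mul_inv_ofReal_sub_sq {μ : Measure ℝ} (hsupp : ∀ᵐ t ∂μ, 0 ≤ t)
    (hμ : Integrable (fun t : ℝ => (1 + t)⁻¹) μ) {z : ℂ} (hz : 0 < z.im) :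
    Integrable (fun t : ℝ => z * ((t : ℂ) - z ^ 2)⁻¹) μ := by
  refine (hμ.const_mul (max 1 (Complex.normSq z) / z.im)).mono' ?_ ?_
  · exact Measurable.aestronglyMeasurable (by fun_prop)
  · filter_upwards [hsupp] with t ht using norm_mul_inv_ofReal_sub_sq_le ht hz

lemma integrable_inv_one_add_of_ae_nonneg {μ : Measure ℝ} [IsFiniteMeasure μ]
    (hsupp : ∀ᵐ t ∂μ, 0 ≤ t) : Integrable (fun t : ℝ => (1 + t)⁻¹) μ := by
  refine Integrable.of_bound (C := 1) (Measurable.aestronglyMeasurable (by fun_prop)) ?_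
  filter_upwards [hsupp] with t ht
  rw [Real.norm_of_nonneg (by positivity)]
  exact inv_le_one_of_one_le₀ (le_add_of_nonneg_right ht)

lemma integral_pos_of_ae_pos {α : Type*} [MeasurableSpace α] {μ : Measure α} [NeZero μ]
    {f : α → ℝ} (hf : Integrable f μ) (hpos : ∀ᵐ a ∂μ, 0 < f a) : 0 < ∫ a, f a ∂μ := by
  have hnonneg : 0 ≤ᵐ[μ] f := hpos.mono fun _ => le_of_lt
  refine (integral_nonneg_of_ae hnonneg).lt_of_ne' fun hzero => ?_
  have hf_zero : f =ᵐ[μ] 0 := (integral_eq_zero_iff_of_nonneg_ae hnonneg hf).1 hzero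
  obtain ⟨a, ha, ha_zero⟩ := (hpos.and hf_zero).exists
  exact ha.ne' ha_zero

theorem stmt_11_general {μ : Measure ℝ} [NeZero μ] (hsupp : ∀ᵐ t ∂μ, 0 ≤ t)
    (hμ : Integrable (fun t : ℝ => (1 + t)⁻¹) μ) {z : ℂ} (hz : 0 < z.im) :
    0 < (z * ∫ t, ((t : ℂ) - z ^ 2)⁻¹ ∂μ).im := by
  have hintegrable := integrable_mul_inv_ofReal_sub_sq hsupp hμ hz
  have him : (z * ∫ t, ((t : ℂ) - z ^ 2)⁻¹ ∂μ).im = ∫ t : ℝ, (z * ((t : ℂ) - z ^ 2)⁻¹).im ∂μ := by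
    rw [← integral_const_mul]
    exact (integral_im hintegrable).symm
  rw [him]
  refine integral_pos_of_ae_pos hintegrable.im ?_
  filter_upwards [hsupp] with t ht using im_mul_inv_ofReal_sub_sq_pos ht hz

/-- for every `z` in the open upper half-plane,
`Im (z·∫ (t - z²)⁻¹ dμ(t)) > 0`; the unwrapping `λ ↦ λ·S(λ²)` of the Stieltjes
transform of `μ` is a Nevanlinna function. -/
theorem stmt_11
    (μ : Measure ℝ) [IsProbabilityMeasure μ]
    (hsupp : ∀ᵐ t ∂μ, 0 ≤ t)
    (hint : ∀ j : ℕ, Integrable (fun t : ℝ => t ^ j) μ) :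
    ∀ z : ℂ, 0 < z.im →
      0 < (z * ∫ t, ((t : ℂ) - z ^ 2)⁻¹ ∂μ).im :=
  fun _ hz => stmt_11_general hsupp (integrable_inv_one_add_of_ae_nonneg hsupp) hz
end

section
/- Let a > 0 and 0 < α < √a. Then for every j ≥ 0 the polynomial X − α² divides P_{j+1}(X) − (P_{j+1}(α²)/P_j(α²))·P_j(X) in ℝ[X], the quotient P̃_j^{(α)}(X) = (P_{j+1}(X) − (P_{j+1}(α²)/P_j(α²))·P_j(X))/(X − α²) is a monic polynomial of degree j, and ∫ P̃_j^{(α)}(t)·t^k·(t − α²) dμ(t) = 0 for all 0 ≤ k < j; that is, (P̃_j^{(α)}) are the monic orthogonal polynomials of the measure (t − α²)·dμ(t). -/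
/-!
With `c = p(β) / q(β)`, the polynomial `p - c·q` vanishes at `β`, so it equals `(X - β)·R`; since
`deg q < deg p`, it has the leading term of `p`. Integrating `R(t)·f(t)` against `(t - β) dμ` thus
amounts to integrating `(p(t) - c·q(t))·f(t)` against `dμ`, so `R` inherits every orthogonality
relation that `p` and `q` have in common.
-/

open Polynomial MeasureTheory

theorem degree_C_mul_le_degree {R : Type*} [Semiring R] (c : R) (p : R[X]) :
    (C c * p).degree ≤ p.degree := by
  rw [← smul_eq_C_mul]
  exact degree_smul_le c p

section Algebra

variable {K : Type*} [Field K] {p q : K[X]} {β : K}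

/-- The Christoffel transform of the pair `p`, `q` at `β`. For consecutive monic orthogonal
polynomials `p = P_{j+1}` and `q = P_j` of a measure `μ`, it is the monic orthogonal polynomial of
degree `j` of `(t - β) dμ(t)`. It is meaningful when `q(β) ≠ 0`, where the division is exact. -/
noncomputable def christoffelTransform (p q : K[X]) (β : K) : K[X] :=
  (p - C (p.eval β / q.eval β) * q) /ₘ (X - C β)

theorem X_sub_C_dvd_sub_C_eval_div_eval_mul (hβ : q.eval β ≠ 0) :
    X - C β ∣ p - C (p.eval β / q.eval β) * q := by
  rw [dvd_iff_isRoot, IsRoot.def, eval_sub, eval_mul, eval_C, div_mul_cancel₀ _ hβ, sub_self]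

theorem X_sub_C_mul_christoffelTransform (hβ : q.eval β ≠ 0) :
    (X - C β) * christoffelTransform p q β = p - C (p.eval β / q.eval β) * q :=
  mul_divByMonic_eq_iff_isRoot.2 (dvd_iff_isRoot.1 (X_sub_C_dvd_sub_C_eval_div_eval_mul hβ))

theorem eval_christoffelTransform_mul_sub (hβ : q.eval β ≠ 0) (t : K) :
    (christoffelTransform p q β).eval t * (t - β) =
      p.eval t - p.eval β / q.eval β * q.eval t := by
  simpa [mul_comm] using congrArg (eval t) (X_sub_C_mul_christoffelTransform (p := p) hβ)

theorem monic_christoffelTransform (hp : p.Monic) (hqp : q.degree < p.degree)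
    (hβ : q.eval β ≠ 0) : (christoffelTransform p q β).Monic := by
  refine (monic_X_sub_C β).of_mul_monic_left ?_
  rw [X_sub_C_mul_christoffelTransform hβ]
  exact hp.sub_of_left ((degree_C_mul_le_degree _ q).trans_lt hqp)

theorem natDegree_christoffelTransform (hqp : q.degree < p.degree) :
    (christoffelTransform p q β).natDegree = p.natDegree - 1 := by
  have hdeg : (p - C (p.eval β / q.eval β) * q).degree = p.degree :=
    degree_sub_eq_left_of_degree_lt ((degree_C_mul_le_degree _ q).trans_lt hqp)
  rw [christoffelTransform, natDegree_divByMonic _ (monic_X_sub_C β), natDegree_X_sub_C,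
    natDegree_eq_of_degree_eq hdeg]

end Algebra

theorem integrable_polynomial_eval {Ω A : Type*} [MeasurableSpace Ω] [NormedRing A]
    {μ : Measure Ω} {f : Ω → A} (hf : ∀ j : ℕ, Integrable (fun ω => f ω ^ j) μ) (p : A[X]) :
    Integrable (fun ω => p.eval (f ω)) μ := by
  simp only [eval_eq_sum_range]
  exact integrable_finsetSum _ fun i _ => (hf i).const_mul _

section Orthogonality

variable {𝕜 : Type*} [RCLike 𝕜] [MeasurableSpace 𝕜] {μ : Measure 𝕜} {p q : 𝕜[X]} {β : 𝕜}

theorem integral_christoffelTransform_mul_sub_eq_zero {f : 𝕜 → 𝕜} (hβ : q.eval β ≠ 0)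
    (hpf : Integrable (fun t => p.eval t * f t) μ) (hqf : Integrable (fun t => q.eval t * f t) μ)
    (hpf0 : ∫ t, p.eval t * f t ∂μ = 0) (hqf0 : ∫ t, q.eval t * f t ∂μ = 0) :
    ∫ t, (christoffelTransform p q β).eval t * f t * (t - β) ∂μ = 0 :=
  calc
    ∫ t, (christoffelTransform p q β).eval t * f t * (t - β) ∂μ =
        ∫ t, p.eval t * f t - p.eval β / q.eval β * (q.eval t * f t) ∂μ := by
      congr with t
      rw [mul_right_comm, eval_christoffelTransform_mul_sub hβ, sub_mul, mul_assoc]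
    _ = ∫ t, p.eval t * f t ∂μ - p.eval β / q.eval β * ∫ t, q.eval t * f t ∂μ := by
      rw [integral_sub hpf (hqf.const_mul _), integral_const_mul]
    _ = 0 := by rw [hpf0, hqf0, mul_zero, sub_zero]

theorem stmt_14_general (hint : ∀ k : ℕ, Integrable (fun t : 𝕜 => t ^ k) μ) {j : ℕ}
    (hp : p.Monic) (hpdeg : p.natDegree = j + 1) (hqdeg : q.natDegree ≤ j)
    (hporth : ∀ k < j, ∫ t, p.eval t * t ^ k ∂μ = 0)
    (hqorth : ∀ k < j, ∫ t, q.eval t * t ^ k ∂μ = 0) (hβ : q.eval β ≠ 0) :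
    X - C β ∣ p - C (p.eval β / q.eval β) * q ∧
      (christoffelTransform p q β).Monic ∧
      (christoffelTransform p q β).natDegree = j ∧
      ∀ k < j, ∫ t, (christoffelTransform p q β).eval t * t ^ k * (t - β) ∂μ = 0 := by
  have hqp : q.degree < p.degree := degree_lt_degree (by omega)
  have hint_mul (r : 𝕜[X]) (k : ℕ) : Integrable (fun t => r.eval t * t ^ k) μ := by
    have h : Integrable (fun t => (r * X ^ k).eval t) μ := integrable_polynomial_eval hint _
    simpa only [eval_mul, eval_pow, eval_X] using h
  refine ⟨X_sub_C_dvd_sub_C_eval_div_eval_mul hβ, monic_christoffelTransform hp hqp hβ, ?_,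
    fun k hk => ?_⟩
  · rw [natDegree_christoffelTransform hqp, hpdeg, Nat.add_sub_cancel]
  · exact integral_christoffelTransform_mul_sub_eq_zero hβ (hint_mul p k) (hint_mul q k)
      (hporth k hk) (hqorth k hk)

end Orthogonality

/-- for `0 < α < √a`, the polynomial `X - α²` divides
`P_{j+1} - (P_{j+1}(α²)/P_j(α²))·P_j`, the quotient `P̃_j^{(α)}` is monic of
degree `j`, and `∫ P̃_j^{(α)}(t)·t^k·(t - α²) dμ(t) = 0` for `0 ≤ k < j`, i.e. the
`P̃_j^{(α)}` are the monic orthogonal polynomials of `(t - α²)·dμ(t)`. -/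
theorem stmt_14
    (a : ℝ) (ha : 0 < a)
    (μ : Measure ℝ) [IsProbabilityMeasure μ]
    (hsupp : ∀ᵐ t ∂μ, a ≤ t)
    (hint : ∀ j : ℕ, Integrable (fun t : ℝ => t ^ j) μ)
    (s : ℕ → ℝ) (hs : ∀ j, s j = ∫ t, t ^ j ∂μ)
    (hDpos : ∀ n : ℕ, 0 < (Matrix.of fun i k : Fin (n + 1) => s (i.1 + k.1)).det)
    (P : ℕ → Polynomial ℝ)
    (hPmonic : ∀ j, (P j).Monic) (hPdeg : ∀ j, (P j).natDegree = j)
    (hPorth : ∀ j k : ℕ, k < j → ∫ t, (P j).eval t * t ^ k ∂μ = 0)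
    (α : ℝ) (hα0 : 0 < α) (hαa : α < Real.sqrt a)
    (hP0 : ∀ j : ℕ, 0 < (-1 : ℝ) ^ j * (P j).eval (α ^ 2)) :
    ∀ j : ℕ,
      (X - C (α ^ 2)) ∣
        (P (j + 1) - C ((P (j + 1)).eval (α ^ 2) / (P j).eval (α ^ 2)) * P j) ∧
      ((P (j + 1) - C ((P (j + 1)).eval (α ^ 2) / (P j).eval (α ^ 2)) * P j)
        /ₘ (X - C (α ^ 2))).Monic ∧
      ((P (j + 1) - C ((P (j + 1)).eval (α ^ 2) / (P j).eval (α ^ 2)) * P j)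
        /ₘ (X - C (α ^ 2))).natDegree = j ∧
      (∀ k : ℕ, k < j →
        ∫ t, ((P (j + 1) - C ((P (j + 1)).eval (α ^ 2) / (P j).eval (α ^ 2)) * P j)
          /ₘ (X - C (α ^ 2))).eval t * t ^ k * (t - α ^ 2) ∂μ = 0) := fun j =>
  stmt_14_general hint (hPmonic (j + 1)) (hPdeg (j + 1)) (hPdeg j).le
    (fun k hk => hPorth (j + 1) k (hk.trans j.lt_succ_self)) (hPorth j)
    (right_ne_zero_of_mul (hP0 j).ne')
end

section
/- Let a > 0 and 0 < α < √a, and set u_j^{(α)} = −P_{j+1}(α²)/P_j(α²) and l_j^{(α)} = c_{j−1}/u_{j−1}^{(α)} for j ≥ 1. With Φ_{2j}^{(α)}(X) = P_j(X²) and Φ_{2j+1}^{(α)}(X) = (X + α)·P̃_j^{(α)}(X²), the following polynomial recurrences hold: X·Φ_0^{(α)} = −α·Φ_0^{(α)} + Φ_1^{(α)}; for every j ≥ 1, X·Φ_{2j}^{(α)} = l_j^{(α)}·Φ_{2j−1}^{(α)} − α·Φ_{2j}^{(α)} + Φ_{2j+1}^{(α)}; and for every j ≥ 0, X·Φ_{2j+1}^{(α)}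 = u_j^{(α)}·Φ_{2j}^{(α)} + α·Φ_{2j+1}^{(α)} + Φ_{2j+2}^{(α)}. (These identities express that 𝔘𝔏 + α·I is the monic tridiagonal Jacobi matrix with diagonal −α, α, −α, α, …, subdiagonal u_0^{(α)}, l_1^{(α)}, u_1^{(α)}, l_2^{(α)}, … and superdiagonal 1, whose monic orthogonal polynomials are the Φ_n^{(α)}.) -/
open Polynomial MeasureTheory

/-!
Evaluating the three-term recurrence of `P` at `x = α²` and dividing by `P_j(x)` says that the
shifted Jacobi matrix `J - x` has an `LU` factorization, with `u_j = -P_{j+1}(x) / P_j(x)` on the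
diagonal of `U` and `l_j` on the subdiagonal of `L`. The kernel polynomials `Q` are given by
`(X - x) Q = U P`, so `(X - x) P = L U P = (X - x) L Q`, and cancelling `X - x` yields the companion
relation `P = L Q`. Substituting `X²` for `X` and using `X² - α² = (X - α) (X + α)` turns
these two relations into recurrences interlacing `P_j(X²)` and `(X + α) Q_j(X²)`.
-/

section CommRing

variable {R : Type*} [CommRing R]

/-- The three-term recurrence `X P = J P`, where `J` is the monic Jacobi matrix with diagonal `b`,
subdiagonal `c` and superdiagonal `1`. It is formulated without the convention `P_{-1} = 0`. -/
structure SatisfiesThreeTermRecurrence (P : ℕ → R[X]) (b c : ℕ → R) : Prop where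
  zero : X * P 0 = P 1 + C (b 0) * P 0
  succ (j : ℕ) : X * P (j + 1) = P (j + 2) + C (b (j + 1)) * P (j + 1) + C (c j) * P j

/-- The entrywise form of the factorization `J - x = L U`, where `J` is the monic Jacobi matrix with
diagonal `b` and subdiagonal `c`, `L` is unit lower bidiagonal with subdiagonal `l 1, l 2, …`, and
`U` is upper bidiagonal with diagonal `u` and superdiagonal `1`. -/
structure IsShiftedJacobiLU (b c : ℕ → R) (x : R) (u l : ℕ → R) : Prop where
  diag_zero : b 0 = x + u 0
  diag_succ (j : ℕ) : b (j + 1) = x + l (j + 1) + u (j + 1)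
  subdiag (j : ℕ) : c j = l (j + 1) * u j

/-- The relation `(X - x) Q = U P` making `Q` the kernel polynomials of `P` at `x`, where `U` is
upper bidiagonal with diagonal `u` and superdiagonal `1`. -/
def IsKernelSequence (P Q : ℕ → R[X]) (x : R) (u : ℕ → R) : Prop :=
  ∀ j, (X - C x) * Q j = P (j + 1) + C (u j) * P j

section KernelSequence

variable {P Q : ℕ → R[X]} {b c u l : ℕ → R} {x : R}

theorem IsKernelSequence.apply_zero_eq (hQ : IsKernelSequence P Q x u)
    (hP : SatisfiesThreeTermRecurrence P b c) (hLU : IsShiftedJacobiLU b c x u l) :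
    P 0 = Q 0 := by
  apply (monic_X_sub_C x).isRegular.left
  change (X - C x) * P 0 = (X - C x) * Q 0
  rw [hQ, sub_mul, hP.zero, hLU.diag_zero, C_add]
  ring

theorem IsKernelSequence.apply_succ_eq (hQ : IsKernelSequence P Q x u)
    (hP : SatisfiesThreeTermRecurrence P b c) (hLU : IsShiftedJacobiLU b c x u l) (j : ℕ) :
    P (j + 1) = C (l (j + 1)) * Q j + Q (j + 1) := by
  apply (monic_X_sub_C x).isRegular.left
  calc (X - C x) * P (j + 1)
      = C (l (j + 1)) * (P (j + 1) + C (u j) * P j)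
          + (P (j + 2) + C (u (j + 1)) * P (j + 1)) := by
        rw [sub_mul, hP.succ, hLU.diag_succ, hLU.subdiag, C_add, C_add, C_mul]
        ring
    _ = (X - C x) * (C (l (j + 1)) * Q j + Q (j + 1)) := by
        rw [← hQ, ← hQ]
        ring

end KernelSequence

section Symmetrization

variable {p q r : R[X]}

theorem X_mul_comp_X_sq_of_eq_add {l : R} (h : p = C l * q + r) (α : R) :
    X * p.comp (X ^ 2) = C l * ((X + C α) * q.comp (X ^ 2)) + C (-α) * p.comp (X ^ 2)
      + (X + C α) * r.comp (X ^ 2) := by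
  have h_sq : p.comp (X ^ 2) = C l * q.comp (X ^ 2) + r.comp (X ^ 2) := by
    rw [h, add_comp, mul_comp, C_comp]
  rw [C_neg]
  linear_combination (X + C α) * h_sq

theorem X_mul_X_add_C_mul_comp_X_sq_of_X_sub_C_mul_eq {u α : R}
    (h : (X - C (α ^ 2)) * q = r + C u * p) :
    X * ((X + C α) * q.comp (X ^ 2)) = C u * p.comp (X ^ 2)
      + C α * ((X + C α) * q.comp (X ^ 2)) + r.comp (X ^ 2) := by
  have h_sq : (X ^ 2 - C α ^ 2) * q.comp (X ^ 2) = r.comp (X ^ 2) + C u * p.comp (X ^ 2) := by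
    simpa only [add_comp, sub_comp, mul_comp, pow_comp, C_comp, X_comp, C_pow]
      using congrArg (fun f : R[X] => f.comp (X ^ 2)) h
  linear_combination h_sq

end Symmetrization

end CommRing

section Field

variable {K : Type*} [Field K] {P : ℕ → K[X]} {b c u l : ℕ → K} {x : K}

theorem SatisfiesThreeTermRecurrence.isShiftedJacobiLU
    (hP : SatisfiesThreeTermRecurrence P b c) (hPx : ∀ j, (P j).eval x ≠ 0)
    (hu : ∀ j, u j = -(P (j + 1)).eval x / (P j).eval x) (hl : ∀ j, l (j + 1) = c j / u j) :
    IsShiftedJacobiLU b c x u l where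
  diag_zero := by
    have h_eval : x * (P 0).eval x = (P 1).eval x + b 0 * (P 0).eval x := by
      simpa only [eval_add, eval_mul, eval_X, eval_C] using congrArg (eval x) hP.zero
    have := hPx 0
    rw [hu]
    field_simp
    linear_combination -h_eval
  diag_succ j := by
    have h_eval : x * (P (j + 1)).eval x =
        (P (j + 2)).eval x + b (j + 1) * (P (j + 1)).eval x + c j * (P j).eval x := by
      simpa only [eval_add, eval_mul, eval_X, eval_C] using congrArg (eval x) (hP.succ j)
    have := hPx j
    have := hPx (j + 1)
    rw [hl, hu, hu]
    field_simp
    linear_combination -h_eval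
  subdiag j := by
    have hu_ne : u j ≠ 0 := by
      rw [hu]
      exact div_ne_zero (neg_ne_zero.2 (hPx (j + 1))) (hPx j)
    rw [hl, div_mul_cancel₀ _ hu_ne]

theorem stmt_16_general (hP : SatisfiesThreeTermRecurrence P b c) {α : K}
    (hPα : ∀ j, (P j).eval (α ^ 2) ≠ 0)
    (hu : ∀ j, u j = -(P (j + 1)).eval (α ^ 2) / (P j).eval (α ^ 2))
    (hl : ∀ j, l (j + 1) = c j / u j)
    {Q : ℕ → K[X]}
    (hQ : ∀ j, (X - C (α ^ 2)) * Q j =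
      P (j + 1) - C ((P (j + 1)).eval (α ^ 2) / (P j).eval (α ^ 2)) * P j)
    {Φ : ℕ → K[X]}
    (hΦeven : ∀ j, Φ (2 * j) = (P j).comp (X ^ 2))
    (hΦodd : ∀ j, Φ (2 * j + 1) = (X + C α) * (Q j).comp (X ^ 2)) :
    (X * Φ 0 = C (-α) * Φ 0 + Φ 1) ∧
    (∀ j : ℕ, X * Φ (2 * j + 2) =
      C (l (j + 1)) * Φ (2 * j + 1) + C (-α) * Φ (2 * j + 2) + Φ (2 * j + 3)) ∧
    (∀ j : ℕ, X * Φ (2 * j + 1) =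
      C (u j) * Φ (2 * j) + C α * Φ (2 * j + 1) + Φ (2 * j + 2)) := by
  have hLU : IsShiftedJacobiLU b c (α ^ 2) u l := hP.isShiftedJacobiLU hPα hu hl
  have hker : IsKernelSequence P Q (α ^ 2) u := fun j => by
    rw [hQ, hu, neg_div, C_neg, neg_mul, sub_eq_add_neg]
  refine ⟨?_, fun j => ?_, fun j => ?_⟩
  · rw [show Φ 0 = (P 0).comp (X ^ 2) from hΦeven 0,
      show Φ 1 = (X + C α) * (Q 0).comp (X ^ 2) from hΦodd 0, ← hker.apply_zero_eq hP hLU, C_neg]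
    ring
  · rw [show 2 * j + 2 = 2 * (j + 1) by ring, show 2 * j + 3 = 2 * (j + 1) + 1 by ring,
      hΦeven, hΦodd, hΦodd]
    exact X_mul_comp_X_sq_of_eq_add (hker.apply_succ_eq hP hLU j) α
  · rw [show 2 * j + 2 = 2 * (j + 1) by ring, hΦeven, hΦeven, hΦodd]
    exact X_mul_X_add_C_mul_comp_X_sq_of_X_sub_C_mul_eq (hker j)

end Field

/-- the polynomials `Φ^{(α)}_n` of the shifted extended Darboux
transformation satisfy the three-term recurrences of the monic Jacobi matrix
`𝔘𝔏 + α·I` with diagonal `-α, α, -α, α, …`, subdiagonal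
`u_0^{(α)}, l_1^{(α)}, u_1^{(α)}, l_2^{(α)}, …` and superdiagonal `1`. -/
theorem stmt_16
    (a : ℝ) (ha : 0 < a)
    (μ : Measure ℝ) [IsProbabilityMeasure μ]
    (hsupp : ∀ᵐ t ∂μ, a ≤ t)
    (hint : ∀ j : ℕ, Integrable (fun t : ℝ => t ^ j) μ)
    (s : ℕ → ℝ) (hs : ∀ j, s j = ∫ t, t ^ j ∂μ)
    (hDpos : ∀ n : ℕ, 0 < (Matrix.of fun i k : Fin (n + 1) => s (i.1 + k.1)).det)
    (P : ℕ → Polynomial ℝ)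
    (hPmonic : ∀ j, (P j).Monic) (hPdeg : ∀ j, (P j).natDegree = j)
    (hPorth : ∀ j k : ℕ, k < j → ∫ t, (P j).eval t * t ^ k ∂μ = 0)
    (b c : ℕ → ℝ) (hc : ∀ j, 0 < c j)
    (hrec0 : X * P 0 = P 1 + C (b 0) * P 0)
    (hrec : ∀ j : ℕ, X * P (j + 1) = P (j + 2) + C (b (j + 1)) * P (j + 1) + C (c j) * P j)
    (α : ℝ) (hα0 : 0 < α) (hαa : α < Real.sqrt a)
    (hP0 : ∀ j : ℕ, 0 < (-1 : ℝ) ^ j * (P j).eval (α ^ 2))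
    (u : ℕ → ℝ) (hu : ∀ j, u j = -((P (j + 1)).eval (α ^ 2)) / (P j).eval (α ^ 2))
    (l : ℕ → ℝ) (hl : ∀ j, l (j + 1) = c j / u j)
    (Ptα : ℕ → Polynomial ℝ)
    (hPtα : ∀ j, (X - C (α ^ 2)) * Ptα j =
      P (j + 1) - C ((P (j + 1)).eval (α ^ 2) / (P j).eval (α ^ 2)) * P j)
    (Φ : ℕ → Polynomial ℝ)
    (hΦeven : ∀ j, Φ (2 * j) = (P j).comp (X ^ 2))
    (hΦodd : ∀ j, Φ (2 * j + 1) = (X + C α) * (Ptα j).comp (X ^ 2)) :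
    (X * Φ 0 = C (-α) * Φ 0 + Φ 1) ∧
    (∀ j : ℕ, X * Φ (2 * j + 2) =
      C (l (j + 1)) * Φ (2 * j + 1) + C (-α) * Φ (2 * j + 2) + Φ (2 * j + 3)) ∧
    (∀ j : ℕ, X * Φ (2 * j + 1) =
      C (u j) * Φ (2 * j) + C α * Φ (2 * j + 1) + Φ (2 * j + 2)) := by
  have hPα (j : ℕ) : (P j).eval (α ^ 2) ≠ 0 := right_ne_zero_of_mul (hP0 j).ne'
  exact stmt_16_general ⟨hrec0, hrec⟩ hPα hu hl hPtα hΦeven hΦodd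
end

section
/- The operator G∘B is self-adjoint on H (i.e. ⟨(G∘B)x, y⟩ = ⟨x, (G∘B)y⟩ for all x, y ∈ H, which says that B is self-adjoint in the Krein space ℓ²(G)), and the spectrum of B equals {λ ∈ ℂ : λ² ∈ spectrum(A)}; in particular, spectrum(B) is contained in ℝ ∪ iℝ. -/
/-!
Splitting `H` into its even and odd coordinates makes `B` the block operator with rows `(0, 1)` and
`(A, 0)`, and `G` the swap of the two blocks. Hence `G B = A ⊕ 1`, which is self-adjoint because `A`
is, and `B² = A ⊕ A`, which has the spectrum of `A`. Since `1 ⊕ (-1)` conjugates `B` to `-B`, the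
spectrum of `B` is symmetric about `0`, so the factorization `z² - B² = (z + B)(z - B)` shows that
`z` lies in the spectrum of `B` exactly when `z²` lies in that of `B²`. Finally, a complex number
with real square is real or purely imaginary.
-/

open scoped InnerProductSpace

section Ring

variable {R : Type*} [Ring R]

theorem spectrum_neg_eq_of_semiconjBy {𝕜 : Type*} [CommRing 𝕜] [Algebra 𝕜 R] {J : Rˣ} {B : R}
    (h : SemiconjBy (J : R) B (-B)) : spectrum 𝕜 (-B) = spectrum 𝕜 B := by
  have conjugate : (J : R) * B * ↑J⁻¹ = -B := by rw [h.eq, Units.mul_inv_cancel_right]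
  rw [← conjugate, spectrum.units_conjugate]

theorem sq_mem_spectrum_sq_iff_of_semiconjBy {𝕜 : Type*} [CommRing 𝕜] [Algebra 𝕜 R] {J : Rˣ}
    {B : R} (h : SemiconjBy (J : R) B (-B)) {z : 𝕜} :
    z ^ 2 ∈ spectrum 𝕜 (B ^ 2) ↔ z ∈ spectrum 𝕜 B := by
  have commute_z : Commute (algebraMap 𝕜 R z) B := Algebra.commutes z B
  have commute_factors : Commute (algebraMap 𝕜 R z + B) (algebraMap 𝕜 R z - B) :=
    ((Commute.refl _).add_left commute_z.symm).sub_right (commute_z.add_left (Commute.refl B))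
  have isUnit_add_iff : IsUnit (algebraMap 𝕜 R z + B) ↔ IsUnit (algebraMap 𝕜 R z - B) := by
    rw [← spectrum.notMem_iff, ← spectrum_neg_eq_of_semiconjBy h, spectrum.notMem_iff,
      sub_neg_eq_add]
  rw [← not_iff_not, spectrum.notMem_iff, spectrum.notMem_iff, map_pow, commute_z.sq_sub_sq,
    commute_factors.isUnit_mul_iff, isUnit_add_iff, and_self_iff]

/-- The relations exhibiting the object on which `R` acts as a direct sum of two copies of itself:
`V`, `W` are the two inclusions and `P`, `Q` the corresponding projections. The orthogonality
relations `P * W = 0` and `Q * V = 0` follow from these three. -/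
structure IsSplitting (V W P Q : R) : Prop where
  fst_mul_inl : P * V = 1
  snd_mul_inr : Q * W = 1
  inl_mul_fst_add_inr_mul_snd : V * P + W * Q = 1

namespace IsSplitting

variable {V W P Q : R}

theorem symm (h : IsSplitting V W P Q) : IsSplitting W V Q P :=
  ⟨h.snd_mul_inr, h.fst_mul_inl, by rw [add_comm, h.inl_mul_fst_add_inr_mul_snd]⟩

theorem fst_mul_inr (h : IsSplitting V W P Q) : P * W = 0 := by
  have fst_mul_inr_mul_snd : P * W * Q = 0 := by
    have fst_mul_one := congrArg (P * ·) h.inl_mul_fst_add_inr_mul_snd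
    simpa only [mul_add, ← mul_assoc, h.fst_mul_inl, one_mul, mul_one, add_eq_left]
      using fst_mul_one
  rw [← mul_one (P * W), ← h.snd_mul_inr, ← mul_assoc, fst_mul_inr_mul_snd, zero_mul]

theorem snd_mul_inl (h : IsSplitting V W P Q) : Q * V = 0 :=
  h.symm.fst_mul_inr

theorem mul_right_ext (h : IsSplitting V W P Q) {x y : R} (hV : x * V = y * V)
    (hW : x * W = y * W) : x = y := by
  rw [← mul_one x, ← mul_one y, ← h.inl_mul_fst_add_inr_mul_snd, mul_add, mul_add, ← mul_assoc,
    ← mul_assoc, ← mul_assoc, ← mul_assoc, hV, hW]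

theorem block_mul_inl (h : IsSplitting V W P Q) (x y : R) : (x * P + y * Q) * V = x := by
  rw [add_mul, mul_assoc, mul_assoc, h.fst_mul_inl, h.snd_mul_inl, mul_one, mul_zero, add_zero]

theorem block_mul_inr (h : IsSplitting V W P Q) (x y : R) : (x * P + y * Q) * W = y := by
  rw [add_comm, h.symm.block_mul_inl]

/-- The block diagonal embedding `x ↦ x ⊕ x`. -/
def diag (𝕜 : Type*) [CommRing 𝕜] [Algebra 𝕜 R] (h : IsSplitting V W P Q) : R →ₐ[𝕜] R where
  toFun x := V * x * P + W * x * Q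
  map_one' := by simp only [mul_one, h.inl_mul_fst_add_inr_mul_snd]
  map_mul' x y := h.mul_right_ext
    (by simp only [mul_assoc _ _ V, h.block_mul_inl, ← mul_assoc])
    (by simp only [mul_assoc _ _ W, h.block_mul_inr, ← mul_assoc])
  map_zero' := by simp only [mul_zero, zero_mul, add_zero]
  map_add' x y := by noncomm_ring
  commutes' r := h.mul_right_ext
    (by rw [h.block_mul_inl, Algebra.commutes])
    (by rw [h.block_mul_inr, Algebra.commutes])

section Diag

variable {𝕜 : Type*} [CommRing 𝕜] [Algebra 𝕜 R]

theorem diag_mul_inl (h : IsSplitting V W P Q) (x : R) : h.diag 𝕜 x * V = V * x :=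
  h.block_mul_inl _ _

theorem diag_mul_inr (h : IsSplitting V W P Q) (x : R) : h.diag 𝕜 x * W = W * x :=
  h.block_mul_inr _ _

theorem fst_mul_diag (h : IsSplitting V W P Q) (x : R) : P * h.diag 𝕜 x = x * P :=
  h.mul_right_ext
    (by rw [mul_assoc, mul_assoc, h.diag_mul_inl, h.fst_mul_inl, ← mul_assoc, h.fst_mul_inl,
      one_mul, mul_one])
    (by rw [mul_assoc, mul_assoc, h.diag_mul_inr, h.fst_mul_inr, ← mul_assoc, h.fst_mul_inr,
      zero_mul, mul_zero])

theorem isUnit_diag_iff (h : IsSplitting V W P Q) {x : R} : IsUnit (h.diag 𝕜 x) ↔ IsUnit x := by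
  refine ⟨fun hx => ?_, fun hx => hx.map (h.diag 𝕜)⟩
  obtain ⟨y, mul_y, y_mul⟩ := isUnit_iff_exists.mp hx
  refine isUnit_iff_exists.mpr ⟨P * y * V, ?_, ?_⟩
  · calc x * (P * y * V) = x * P * y * V := by simp only [mul_assoc]
      _ = P * (h.diag 𝕜 x * y) * V := by rw [← h.fst_mul_diag (𝕜 := 𝕜), mul_assoc P]
      _ = 1 := by rw [mul_y, mul_one, h.fst_mul_inl]
  · calc P * y * V * x = P * y * (V * x) := mul_assoc _ _ _
      _ = P * (y * h.diag 𝕜 x) * V := by rw [← h.diag_mul_inl (𝕜 := 𝕜)]; simp only [mul_assoc]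
      _ = 1 := by rw [y_mul, mul_one, h.fst_mul_inl]

theorem spectrum_diag (h : IsSplitting V W P Q) (x : R) :
    spectrum 𝕜 (h.diag 𝕜 x) = spectrum 𝕜 x := by
  ext z
  rw [spectrum.mem_iff, spectrum.mem_iff, ← h.isUnit_diag_iff (𝕜 := 𝕜) (x := _ - x), map_sub,
    AlgHom.commutes]

theorem sq_eq_diag (h : IsSplitting V W P Q) {A B : R} (hBV : B * V = W * A) (hBW : B * W = V) :
    B ^ 2 = h.diag 𝕜 A :=
  h.mul_right_ext
    (by rw [sq, mul_assoc, hBV, ← mul_assoc, hBW, h.diag_mul_inl])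
    (by rw [sq, mul_assoc, hBW, hBV, h.diag_mul_inr])

end Diag

/-- The grading involution `1 ⊕ (-1)`, as a unit. -/
def grading (h : IsSplitting V W P Q) : Rˣ :=
  have mul_self : (V * P + -W * Q) * (V * P + -W * Q) = 1 := h.mul_right_ext
    (by simp only [mul_assoc _ _ V, h.block_mul_inl, one_mul])
    (by simp only [mul_assoc _ _ W, h.block_mul_inr, mul_neg, neg_neg, one_mul])
  ⟨V * P + -W * Q, V * P + -W * Q, mul_self, mul_self⟩

theorem grading_mul_inl (h : IsSplitting V W P Q) : (h.grading : R) * V = V :=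
  h.block_mul_inl _ _

theorem grading_mul_inr (h : IsSplitting V W P Q) : (h.grading : R) * W = -W :=
  h.block_mul_inr _ _

theorem grading_semiconjBy_neg (h : IsSplitting V W P Q) {A B : R} (hBV : B * V = W * A)
    (hBW : B * W = V) : SemiconjBy (h.grading : R) B (-B) :=
  h.mul_right_ext
    (by rw [mul_assoc, hBV, ← mul_assoc, h.grading_mul_inr, mul_assoc, h.grading_mul_inl, neg_mul,
      neg_mul, hBV])
    (by rw [mul_assoc, hBW, h.grading_mul_inl, mul_assoc, h.grading_mul_inr, neg_mul_neg, hBW])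

theorem spectrum_eq_setOf_sq_mem {𝕜 : Type*} [CommRing 𝕜] [Algebra 𝕜 R]
    (h : IsSplitting V W P Q) {A B : R} (hBV : B * V = W * A) (hBW : B * W = V) :
    spectrum 𝕜 B = {z : 𝕜 | z ^ 2 ∈ spectrum 𝕜 A} := by
  ext z
  rw [Set.mem_ofPred_eq, ← h.spectrum_diag A, ← h.sq_eq_diag hBV hBW,
    sq_mem_spectrum_sq_iff_of_semiconjBy (h.grading_semiconjBy_neg hBV hBW)]

theorem swap_mul_eq (h : IsSplitting V W P Q) {A B G : R} (hBV : B * V = W * A) (hBW : B * W = V)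
    (hGV : G * V = W) (hGW : G * W = V) : G * B = V * A * P + W * Q :=
  h.mul_right_ext
    (by rw [h.block_mul_inl, mul_assoc, hBV, ← mul_assoc, hGW])
    (by rw [h.block_mul_inr, mul_assoc, hBW, hGV])

theorem isSelfAdjoint_swap_mul [StarRing R] (h : IsSplitting V W (star V) (star W)) {A B G : R}
    (hA : IsSelfAdjoint A) (hBV : B * V = W * A) (hBW : B * W = V) (hGV : G * V = W)
    (hGW : G * W = V) : IsSelfAdjoint (G * B) := by
  rw [h.swap_mul_eq hBV hBW hGV hGW]
  exact (hA.conjugate V).add (.mul_star_self W)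

end IsSplitting

end Ring

theorem im_eq_zero_or_re_eq_zero_of_sq_im_eq_zero {z : ℂ} (hz : (z ^ 2).im = 0) :
    z.im = 0 ∨ z.re = 0 := by
  have two_mul_re_mul_im : 2 * (z.re * z.im) = 0 := by
    rw [sq, Complex.mul_im] at hz
    linarith
  exact (mul_eq_zero.mp ((mul_eq_zero_iff_left two_ne_zero).mp two_mul_re_mul_im)).symm

theorem setOf_sq_mem_spectrum_subset {R : Type*} [CStarAlgebra R] {A : R}
    (hA : IsSelfAdjoint A) :
    {z : ℂ | z ^ 2 ∈ spectrum ℂ A} ⊆ {z : ℂ | z.im = 0} ∪ {z : ℂ | z.re = 0} :=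
  fun _ hz => im_eq_zero_or_re_eq_zero_of_sq_im_eq_zero (hA.im_eq_zero_of_mem_spectrum hz)

section HilbertBasis

variable {ι κ 𝕜 E F : Type*} [RCLike 𝕜] [NormedAddCommGroup E] [InnerProductSpace 𝕜 E]
  [NormedAddCommGroup F] [InnerProductSpace 𝕜 F]

theorem clm_ext_hilbertBasis (e : HilbertBasis ι 𝕜 E) {S T : E →L[𝕜] F}
    (h : ∀ i, S (e i) = T (e i)) : S = T :=
  ContinuousLinearMap.ext_on
    ((Submodule.dense_iff_topologicalClosure_eq_top).mpr e.dense_span)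
    (Set.forall_mem_range.mpr h)

theorem eq_of_inner_hilbertBasis_eq (e : HilbertBasis ι 𝕜 E) {x y : E}
    (h : ∀ i, ⟪e i, x⟫_𝕜 = ⟪e i, y⟫_𝕜) : x = y := by
  refine e.repr.injective (lp.ext (funext fun i => ?_))
  rw [e.repr_apply_apply, e.repr_apply_apply, h]

theorem isSelfAdjoint_of_inner_hilbertBasis [CompleteSpace E] (e : HilbertBasis ι 𝕜 E)
    {T : E →L[𝕜] E} (h : ∀ i j, ⟪T (e i), e j⟫_𝕜 = ⟪e i, T (e j)⟫_𝕜) : IsSelfAdjoint T := by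
  refine ContinuousLinearMap.isSelfAdjoint_iff'.mpr <| clm_ext_hilbertBasis e fun j =>
    eq_of_inner_hilbertBasis_eq e fun i => ?_
  rw [ContinuousLinearMap.adjoint_inner_right, h]

variable [CompleteSpace F]

/-- The isometry sending `e i` to `u (f i)`, for an injective map `f` of the index sets. -/
noncomputable def basisEmbedding (e : HilbertBasis ι 𝕜 E) (u : HilbertBasis κ 𝕜 F)
    {f : ι → κ} (hf : f.Injective) : E →ₗᵢ[𝕜] F :=
  (u.orthonormal.comp f hf).orthogonalFamily.linearIsometry.comp e.repr.toLinearIsometry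

@[simp]
theorem basisEmbedding_apply (e : HilbertBasis ι 𝕜 E) (u : HilbertBasis κ 𝕜 F)
    {f : ι → κ} (hf : f.Injective) (i : ι) : basisEmbedding e u hf (e i) = u (f i) := by
  classical
  simp [basisEmbedding, HilbertBasis.repr_self, OrthogonalFamily.linearIsometry_apply_single]

variable [CompleteSpace E]

theorem adjoint_basisEmbedding_apply_of_notMem (e : HilbertBasis ι 𝕜 E) (u : HilbertBasis κ 𝕜 F)
    {f : ι → κ} (hf : f.Injective) {k : κ} (hk : k ∉ Set.range f) :
    (basisEmbedding e u hf).toContinuousLinearMap.adjoint (u k) = 0 := by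
  refine eq_of_inner_hilbertBasis_eq e fun i => ?_
  rw [ContinuousLinearMap.adjoint_inner_right, LinearIsometry.coe_toContinuousLinearMap,
    basisEmbedding_apply, inner_zero_right]
  exact u.orthonormal.inner_eq_zero fun h => hk ⟨i, h⟩

theorem adjoint_basisEmbedding_apply (e : HilbertBasis ι 𝕜 E) (u : HilbertBasis κ 𝕜 F)
    {f : ι → κ} (hf : f.Injective) (i : ι) :
    (basisEmbedding e u hf).toContinuousLinearMap.adjoint (u (f i)) = e i := by
  rw [← basisEmbedding_apply e u hf]
  exact DFunLike.congr_fun (basisEmbedding e u hf).adjoint_comp_self (e i)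

theorem isSplitting_basisEmbedding (e : HilbertBasis ι 𝕜 E) {f g : ι → ι} (hf : f.Injective)
    (hg : g.Injective) (hfg : IsCompl (Set.range f) (Set.range g)) :
    IsSplitting (basisEmbedding e e hf).toContinuousLinearMap
      (basisEmbedding e e hg).toContinuousLinearMap
      (star (basisEmbedding e e hf).toContinuousLinearMap)
      (star (basisEmbedding e e hg).toContinuousLinearMap) where
  fst_mul_inl := (basisEmbedding e e hf).adjoint_comp_self
  snd_mul_inr := (basisEmbedding e e hg).adjoint_comp_self
  inl_mul_fst_add_inr_mul_snd := by
    refine clm_ext_hilbertBasis e fun i => ?_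
    rw [ContinuousLinearMap.star_eq_adjoint, ContinuousLinearMap.star_eq_adjoint]
    simp only [add_apply, mul_apply_eq_comp, one_apply_eq_self]
    have mem_range : i ∈ Set.range f ∪ Set.range g := hfg.codisjoint.top_le trivial
    rcases mem_range with ⟨j, rfl⟩ | ⟨j, rfl⟩
    · have notMem_range : f j ∉ Set.range g := hfg.disjoint.notMem_of_mem_left ⟨j, rfl⟩
      simp [adjoint_basisEmbedding_apply, adjoint_basisEmbedding_apply_of_notMem _ _ _ notMem_range]
    · have notMem_range : g j ∉ Set.range f := hfg.disjoint.notMem_of_mem_right ⟨j, rfl⟩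
      simp [adjoint_basisEmbedding_apply, adjoint_basisEmbedding_apply_of_notMem _ _ _ notMem_range]

theorem default_hilbertBasis_apply [DecidableEq ι] (i : ι) :
    (default : HilbertBasis ι 𝕜 (lp (fun _ : ι => 𝕜) 2)) i = lp.single 2 i 1 :=
  (HilbertBasis.repr_symm_single _ i).symm

end HilbertBasis

section Jacobi

variable {𝕜 E : Type*} [RCLike 𝕜] [NormedAddCommGroup E] [InnerProductSpace 𝕜 E]

/-- The symmetric tridiagonal matrix with diagonal `b` and off-diagonal `a`; in terms of the
coefficients `c` of a monic Jacobi matrix, its symmetrization has `a n = √(c n)`. -/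
def jacobiMatrix (a b : ℕ → ℝ) : Matrix ℕ ℕ ℝ :=
  Matrix.of fun m n =>
    if m = n then b n else if m = n + 1 then a n else if n = m + 1 then a m else 0

theorem isSymm_jacobiMatrix (a b : ℕ → ℝ) : (jacobiMatrix a b).IsSymm := by
  ext m n
  simp only [jacobiMatrix, Matrix.transpose_apply, Matrix.of_apply]
  grind

/-- `A` acts on the sequence `e` by the Jacobi matrix with diagonal `b` and off-diagonal `a`. -/
structure IsJacobiOperator (e : ℕ → E) (a b : ℕ → ℝ) (A : E →L[𝕜] E) : Prop where
  apply_zero : A (e 0) = (b 0 : 𝕜) • e 0 + (a 0 : 𝕜) • e 1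
  apply_succ (n : ℕ) : A (e (n + 1)) =
    (a n : 𝕜) • e n + (b (n + 1) : 𝕜) • e (n + 1) + (a (n + 1) : 𝕜) • e (n + 2)

/-- `B` acts on the sequence `e` by the symmetrized generalized Jacobi matrix associated with
`F(λ²)`, where `F` is the Weyl function of the Jacobi matrix with diagonal `b` and
off-diagonal `a`. -/
structure IsGeneralizedJacobiOperator (e : ℕ → E) (a b : ℕ → ℝ) (B : E →L[𝕜] E) : Prop where
  apply_zero : B (e 0) = (b 0 : 𝕜) • e 1 + (a 0 : 𝕜) • e 3
  apply_even_succ (j : ℕ) : B (e (2 * (j + 1))) =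
    (a j : 𝕜) • e (2 * j + 1) + (b (j + 1) : 𝕜) • e (2 * j + 3)
      + (a (j + 1) : 𝕜) • e (2 * j + 5)
  apply_odd (j : ℕ) : B (e (2 * j + 1)) = e (2 * j)

/-- `G` is the Gram operator of the Krein space `ℓ²(G)`: it exchanges `e (2 * j)` and
`e (2 * j + 1)`. -/
structure IsGramOperator (e : ℕ → E) (G : E →L[𝕜] E) : Prop where
  apply_even (j : ℕ) : G (e (2 * j)) = e (2 * j + 1)
  apply_odd (j : ℕ) : G (e (2 * j + 1)) = e (2 * j)

theorem IsJacobiOperator.inner_apply {e : ℕ → E} {a b : ℕ → ℝ} {A : E →L[𝕜] E}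
    (hA : IsJacobiOperator e a b A) (he : Orthonormal 𝕜 e) (m n : ℕ) :
    ⟪e m, A (e n)⟫_𝕜 = (jacobiMatrix a b m n : 𝕜) := by
  have inner_basis (k l : ℕ) : ⟪e k, e l⟫_𝕜 = if k = l then 1 else 0 :=
    orthonormal_iff_ite.mp he k l
  rcases n with _ | n
  · simp only [hA.apply_zero, inner_add_right, inner_smul_right, inner_basis, jacobiMatrix,
      Matrix.of_apply]
    grind
  · simp only [hA.apply_succ, inner_add_right, inner_smul_right, inner_basis, jacobiMatrix,
      Matrix.of_apply]
    grind

variable [CompleteSpace E] {e : HilbertBasis ℕ 𝕜 E} {a b : ℕ → ℝ} {A B G : E →L[𝕜] E}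

theorem IsJacobiOperator.isSelfAdjoint (hA : IsJacobiOperator e a b A) : IsSelfAdjoint A :=
  isSelfAdjoint_of_inner_hilbertBasis e fun m n => by
    rw [← inner_conj_symm, hA.inner_apply e.orthonormal, hA.inner_apply e.orthonormal,
      RCLike.conj_ofReal, (isSymm_jacobiMatrix a b).apply]

theorem two_mul_injective : Function.Injective fun n : ℕ => 2 * n :=
  mul_right_injective₀ two_ne_zero

theorem two_mul_add_one_injective : Function.Injective fun n : ℕ => 2 * n + 1 :=
  (add_left_injective 1).comp two_mul_injective

/-- The isometry `e n ↦ e (2 * n)`, onto the closed span of the even basis vectors. -/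
noncomputable def evenInclusion (e : HilbertBasis ℕ 𝕜 E) : E →L[𝕜] E :=
  (basisEmbedding e e two_mul_injective).toContinuousLinearMap

/-- The isometry `e n ↦ e (2 * n + 1)`, onto the closed span of the odd basis vectors. -/
noncomputable def oddInclusion (e : HilbertBasis ℕ 𝕜 E) : E →L[𝕜] E :=
  (basisEmbedding e e two_mul_add_one_injective).toContinuousLinearMap

@[simp]
theorem evenInclusion_apply (e : HilbertBasis ℕ 𝕜 E) (n : ℕ) :
    evenInclusion e (e n) = e (2 * n) :=
  basisEmbedding_apply _ _ two_mul_injective n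

@[simp]
theorem oddInclusion_apply (e : HilbertBasis ℕ 𝕜 E) (n : ℕ) :
    oddInclusion e (e n) = e (2 * n + 1) :=
  basisEmbedding_apply _ _ two_mul_add_one_injective n

theorem isSplitting_even_odd (e : HilbertBasis ℕ 𝕜 E) :
    IsSplitting (evenInclusion e) (oddInclusion e) (star (evenInclusion e))
      (star (oddInclusion e)) := by
  refine isSplitting_basisEmbedding e two_mul_injective two_mul_add_one_injective ?_
  rw [range_two_mul, range_two_mul_add_one]
  exact Nat.isCompl_even_odd

theorem IsGeneralizedJacobiOperator.mul_evenInclusion (hB : IsGeneralizedJacobiOperator e a b B)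
    (hA : IsJacobiOperator e a b A) : B * evenInclusion e = oddInclusion e * A := by
  refine clm_ext_hilbertBasis e fun n => ?_
  simp only [mul_apply_eq_comp, evenInclusion_apply]
  rcases n with _ | n
  · simp only [mul_zero, hB.apply_zero, hA.apply_zero, map_add, map_smul, oddInclusion_apply]
  · simp only [hB.apply_even_succ, hA.apply_succ, map_add, map_smul, oddInclusion_apply]
    rfl

theorem IsGeneralizedJacobiOperator.mul_oddInclusion (hB : IsGeneralizedJacobiOperator e a b B) :
    B * oddInclusion e = evenInclusion e :=
  clm_ext_hilbertBasis e fun n => by simp [hB.apply_odd]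

theorem IsGramOperator.mul_evenInclusion (hG : IsGramOperator e G) :
    G * evenInclusion e = oddInclusion e :=
  clm_ext_hilbertBasis e fun n => by simp [hG.apply_even]

theorem IsGramOperator.mul_oddInclusion (hG : IsGramOperator e G) :
    G * oddInclusion e = evenInclusion e :=
  clm_ext_hilbertBasis e fun n => by simp [hG.apply_odd]

end Jacobi

theorem stmt_18_general {H : Type*} [NormedAddCommGroup H] [InnerProductSpace ℂ H]
    [CompleteSpace H] {e : HilbertBasis ℕ ℂ H} {a b : ℕ → ℝ} {A B G : H →L[ℂ] H}
    (hA : IsJacobiOperator e a b A) (hB : IsGeneralizedJacobiOperator e a b B)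
    (hG : IsGramOperator e G) :
    (∀ x y : H, ⟪(G ∘L B) x, y⟫_ℂ = ⟪x, (G ∘L B) y⟫_ℂ) ∧
    spectrum ℂ B = {z : ℂ | z ^ 2 ∈ spectrum ℂ A} ∧
    spectrum ℂ B ⊆ {z : ℂ | z.im = 0} ∪ {z : ℂ | z.re = 0} := by
  have splitting := isSplitting_even_odd e
  have gram_selfAdjoint : IsSelfAdjoint (G * B) :=
    splitting.isSelfAdjoint_swap_mul hA.isSelfAdjoint (hB.mul_evenInclusion hA)
      hB.mul_oddInclusion hG.mul_evenInclusion hG.mul_oddInclusion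
  have spectrum_eq : spectrum ℂ B = {z : ℂ | z ^ 2 ∈ spectrum ℂ A} :=
    splitting.spectrum_eq_setOf_sq_mem (hB.mul_evenInclusion hA) hB.mul_oddInclusion
  exact ⟨gram_selfAdjoint.isSymmetric, spectrum_eq,
    spectrum_eq.trans_subset (setOf_sq_mem_spectrum_subset hA.isSelfAdjoint)⟩

/-- `G∘B` is self-adjoint on `H = ℓ²(ℕ, ℂ)` (i.e. `B` is
self-adjoint in the Krein space `ℓ²(G)`), and
`spectrum B = {λ : λ² ∈ spectrum A} ⊆ ℝ ∪ iℝ`. -/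
theorem stmt_18
    (b c : ℕ → ℝ)
    (hbbdd : ∃ M : ℝ, ∀ n, |b n| ≤ M) (hcbdd : ∃ M : ℝ, ∀ n, |c n| ≤ M)
    (hc : ∀ j, 0 < c j)
    (A B G : lp (fun _ : ℕ => ℂ) 2 →L[ℂ] lp (fun _ : ℕ => ℂ) 2)
    (e : ℕ → lp (fun _ : ℕ => ℂ) 2) (he : ∀ n, e n = lp.single 2 n (1 : ℂ))
    (hA0 : A (e 0) = (b 0 : ℂ) • e 0 + (Real.sqrt (c 0) : ℂ) • e 1)
    (hA : ∀ n : ℕ, A (e (n + 1)) = (Real.sqrt (c n) : ℂ) • e n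
      + (b (n + 1) : ℂ) • e (n + 1) + (Real.sqrt (c (n + 1)) : ℂ) • e (n + 2))
    (hB0 : B (e 0) = (b 0 : ℂ) • e 1 + (Real.sqrt (c 0) : ℂ) • e 3)
    (hBeven : ∀ j : ℕ, B (e (2 * (j + 1))) = (Real.sqrt (c j) : ℂ) • e (2 * j + 1)
      + (b (j + 1) : ℂ) • e (2 * j + 3) + (Real.sqrt (c (j + 1)) : ℂ) • e (2 * j + 5))
    (hBodd : ∀ j : ℕ, B (e (2 * j + 1)) = e (2 * j))
    (hGeven : ∀ j : ℕ, G (e (2 * j)) = e (2 * j + 1))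
    (hGodd : ∀ j : ℕ, G (e (2 * j + 1)) = e (2 * j)) :
    (∀ x y : lp (fun _ : ℕ => ℂ) 2, ⟪(G ∘L B) x, y⟫_ℂ = ⟪x, (G ∘L B) y⟫_ℂ) ∧
    spectrum ℂ B = {z : ℂ | z ^ 2 ∈ spectrum ℂ A} ∧
    spectrum ℂ B ⊆ {z : ℂ | z.im = 0} ∪ {z : ℂ | z.re = 0} := by
  obtain rfl : e = (default : HilbertBasis ℕ ℂ (lp (fun _ : ℕ => ℂ) 2)) :=
    funext fun n => (he n).trans (default_hilbertBasis_apply n).symm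
  exact stmt_18_general (a := fun n => √(c n)) ⟨hA0, hA⟩ ⟨hB0, hBeven, hBodd⟩ ⟨hGeven, hGodd⟩
end

section
/- Assume in addition that A is nonnegative, i.e. ⟨A x, x⟩ is real and ≥ 0 for every x ∈ H (as holds when the Jacobi matrix J_s corresponds to a Stieltjes function). Then Re⟨(G∘B)x, x⟩ ≥ 0 for every x ∈ H (B is nonnegative in the Krein space ℓ²(G), hence definitizable by the polynomial p(λ) = λ), and the spectrum of B equals {λ ∈ ℂ : λ² ∈ spectrum(A)} and is contained in ℝ. -/
open scoped InnerProductSpace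

/-!
Split `ℓ²` into its even and odd coordinates by the isometries `V e_j = e_{2j}` and
`W e_j = e_{2j+1}`. Then `B` becomes the companion operator `(x, y) ↦ (y, A x)` of the quadratic
pencil `z² - A`, and `G` swaps the components. Hence `G ∘ B` is `A ⊕ 1`, which is nonnegative, and
elimination of one component reduces the resolvent equation of `B` at `z` to that of `A` at `z²`.
Since the spectrum of a nonnegative `A` lies in `[0, ∞)`, every `z` with `z²` in it is real.
-/

section Companion

variable {R M N : Type*} [CommRing R] [AddCommGroup M] [Module R M] [AddCommGroup N] [Module R N]

/-- The companion operator `(x, y) ↦ (y, A x)` of the quadratic pencil `z² - A`; as a block matrix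
it is `[[0, 1], [A, 0]]`. -/
def companion (A : Module.End R M) : Module.End R (M × M) :=
  (LinearMap.snd R M M).prod (A ∘ₗ LinearMap.fst R M M)

theorem bijective_algebraMap_sub_companion_iff (A : Module.End R M) (z : R) :
    Function.Bijective (algebraMap R (Module.End R (M × M)) z - companion A) ↔
      Function.Bijective (algebraMap R (Module.End R M) (z ^ 2) - A) := by
  -- Substituting `y = z x - f` triangularizes the equation `(z - companion A) (x, y) = (f, g)`:
  -- its second component becomes `(z² - A) x = g + z f`.
  let substitution : (M × M) ≃ₗ[R] M × M :=
    (LinearEquiv.refl R M).skewProd (LinearEquiv.neg R) (z • LinearMap.id)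
  let elimination : (M × M) ≃ₗ[R] M × M :=
    (LinearEquiv.prodComm R M M).trans
      ((LinearEquiv.refl R M).skewProd (LinearEquiv.refl R M) (-z • LinearMap.id))
  have factorization :
      (algebraMap R (Module.End R (M × M)) z - companion A) ∘ substitution =
        elimination ∘ Prod.map (algebraMap R (Module.End R M) (z ^ 2) - A) id := by
    funext ⟨x, f⟩
    ext
    · simp [companion, substitution, elimination]
    · simp [companion, substitution, elimination, sq, smul_add]
      abel
  rw [← Function.Bijective.of_comp_iff _ substitution.bijective, factorization,
    Function.Bijective.of_comp_iff' elimination.bijective, Prod.map_bijective,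
    and_iff_left Function.bijective_id]

theorem spectrum_companion (A : Module.End R M) :
    spectrum R (companion A) = {z | z ^ 2 ∈ spectrum R A} := by
  ext z
  simp only [Set.mem_ofPred_eq, spectrum.mem_iff, Module.End.isUnit_iff,
    bijective_algebraMap_sub_companion_iff]

theorem spectrum_eq_of_isCompl_range {A : Module.End R M} {B : Module.End R N}
    {V W : M →ₗ[R] N} (hV : Function.Injective V) (hW : Function.Injective W)
    (hVW : IsCompl V.range W.range) (hBV : B ∘ₗ V = W ∘ₗ A) (hBW : B ∘ₗ W = V) :
    spectrum R B = {z | z ^ 2 ∈ spectrum R A} := by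
  let Φ : (M × M) ≃ₗ[R] N :=
    ((LinearEquiv.ofInjective V hV).prodCongr (LinearEquiv.ofInjective W hW)).trans
      (V.range.prodEquivOfIsCompl W.range hVW)
  have hΦ (x y : M) : Φ (x, y) = V x + W y := by simp [Φ]
  have conj_companion : Φ.conjAlgEquiv R (companion A) = B := by
    rw [LinearEquiv.conjAlgEquiv_apply, ← LinearMap.comp_assoc,
      LinearEquiv.comp_toLinearMap_symm_eq]
    ext x
    · simpa [hΦ, companion] using (LinearMap.congr_fun hBV x).symm
    · simpa [hΦ, companion] using (LinearMap.congr_fun hBW x).symm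
  rw [← conj_companion, AlgEquiv.spectrum_eq, spectrum_companion]

end Companion

section Hilbert

variable {𝕜 H K : Type*} [RCLike 𝕜] [NormedAddCommGroup H] [InnerProductSpace 𝕜 H]
  [NormedAddCommGroup K] [InnerProductSpace 𝕜 K]

section Blocks

variable {V W : H →ₗᵢ[𝕜] K} {A : H →L[𝕜] H} {B G : K →L[𝕜] K}

theorem isCompl_range_of_orthogonal_range_eq [CompleteSpace H]
    (hVW : V.toLinearMap.rangeᗮ = W.toLinearMap.range) :
    IsCompl V.toLinearMap.range W.toLinearMap.range := by
  have : CompleteSpace V.toLinearMap.range :=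
    V.isometry.isUniformInducing.isComplete_range.completeSpace_coe
  rw [← hVW]
  exact V.toLinearMap.range.isCompl_orthogonal

theorem spectrum_eq_of_orthogonal_range_eq [CompleteSpace H] [CompleteSpace K]
    (hVW : V.toLinearMap.rangeᗮ = W.toLinearMap.range)
    (hBV : ∀ x, B (V x) = W (A x)) (hBW : ∀ x, B (W x) = V x) :
    spectrum 𝕜 B = {z | z ^ 2 ∈ spectrum 𝕜 A} := by
  rw [B.spectrum_eq, A.spectrum_eq]
  exact spectrum_eq_of_isCompl_range V.injective W.injective
    (isCompl_range_of_orthogonal_range_eq hVW) (LinearMap.ext hBV) (LinearMap.ext hBW)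

theorem re_inner_swap_comp_nonneg [CompleteSpace H]
    (hVW : V.toLinearMap.rangeᗮ = W.toLinearMap.range)
    (hBV : ∀ x, B (V x) = W (A x)) (hBW : ∀ x, B (W x) = V x)
    (hGV : ∀ x, G (V x) = W x) (hGW : ∀ x, G (W x) = V x) (hA : A.IsPositive) (k : K) :
    0 ≤ RCLike.re ⟪(G ∘L B) k, k⟫_𝕜 := by
  have inner_V_W (x y : H) : ⟪V x, W y⟫_𝕜 = 0 := by
    have : W y ∈ V.toLinearMap.rangeᗮ := hVW ▸ LinearMap.mem_range_self W.toLinearMap y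
    exact this (V x) (LinearMap.mem_range_self V.toLinearMap x)
  obtain ⟨x, y, rfl⟩ : ∃ x y, V x + W y = k := by
    have : k ∈ V.toLinearMap.range ⊔ W.toLinearMap.range := by
      simp only [(isCompl_range_of_orthogonal_range_eq hVW).sup_eq_top, Submodule.mem_top]
    obtain ⟨_, ⟨x, rfl⟩, _, ⟨y, rfl⟩, hk⟩ := Submodule.mem_sup.mp this
    exact ⟨x, y, hk⟩
  calc 0 ≤ RCLike.re ⟪A x, x⟫_𝕜 + RCLike.re ⟪y, y⟫_𝕜 :=
        add_nonneg (hA.re_inner_nonneg_left x) inner_self_nonneg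
    _ = RCLike.re ⟪V (A x) + W y, V x + W y⟫_𝕜 := by
        simp [inner_add_left, inner_add_right, inner_V_W, inner_eq_zero_symm.mp (inner_V_W _ _)]
    _ = RCLike.re ⟪(G ∘L B) (V x + W y), V x + W y⟫_𝕜 := by
        simp [hBV, hBW, hGV, hGW]

end Blocks

section HilbertBasis

variable {ι κ : Type*}

/-- The isometry sending the `i`-th vector of the Hilbert basis `u` to the `i`-th vector of the
orthonormal family `w`. -/
noncomputable def isometryOfOrthonormal [CompleteSpace K] (u : HilbertBasis ι 𝕜 H) {w : ι → K}
    (hw : Orthonormal 𝕜 w) : H →ₗᵢ[𝕜] K :=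
  hw.orthogonalFamily.linearIsometry.comp u.repr.toLinearIsometry

theorem isometryOfOrthonormal_apply [CompleteSpace K] (u : HilbertBasis ι 𝕜 H) {w : ι → K}
    (hw : Orthonormal 𝕜 w) (i : ι) : isometryOfOrthonormal u hw (u i) = w i := by
  classical
  simp [isometryOfOrthonormal, HilbertBasis.repr_self, OrthogonalFamily.linearIsometry_apply_single]

theorem hilbertBasis_clm_ext (u : HilbertBasis ι 𝕜 H) {S T : H →L[𝕜] K}
    (h : ∀ i, S (u i) = T (u i)) : S = T :=
  ContinuousLinearMap.ext_on
    ((Submodule.dense_iff_topologicalClosure_eq_top).mpr u.dense_span)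
    (Set.forall_mem_range.mpr h)

theorem orthogonal_span_image_eq (u : HilbertBasis ι 𝕜 H) (s : Set ι) :
    (Submodule.span 𝕜 (u '' s))ᗮ = (Submodule.span 𝕜 (u '' sᶜ)).topologicalClosure := by
  apply le_antisymm
  · intro x hx
    refine mem_closure_of_tendsto (u.hasSum_repr x) (.of_forall fun t => ?_)
    refine Submodule.sum_mem _ fun i _ => ?_
    by_cases hi : i ∈ s
    · have : u.repr x i = 0 := by
        rw [u.repr_apply_apply]
        exact hx _ (Submodule.subset_span ⟨i, hi, rfl⟩)
      simp [this]
    · exact Submodule.smul_mem _ _ (Submodule.subset_span ⟨i, hi, rfl⟩)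
  · refine Submodule.topologicalClosure_minimal _ ?_ (Submodule.isClosed_orthogonal _)
    rw [← Submodule.IsOrtho, Submodule.isOrtho_span]
    rintro _ ⟨i, hi, rfl⟩ _ ⟨j, hj, rfl⟩
    exact u.orthonormal.2 fun hij => hi (hij ▸ hj)

theorem range_eq_topologicalClosure_span [CompleteSpace H] (u : HilbertBasis ι 𝕜 H)
    (V : H →ₗᵢ[𝕜] K) :
    V.toLinearMap.range = (Submodule.span 𝕜 (Set.range (V ∘ u))).topologicalClosure := by
  have map_span : (Submodule.span 𝕜 (Set.range u)).map V.toLinearMap =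
      Submodule.span 𝕜 (Set.range (V ∘ u)) := by
    rw [Submodule.map_span, Set.range_comp]
    rfl
  rw [LinearMap.range_eq_map, ← u.dense_span, ← map_span]
  exact SetLike.coe_injective (V.isometry.isClosedEmbedding.closure_image_eq _).symm

theorem orthogonal_range_eq_range_of_isCompl {ι' H' : Type*} [NormedAddCommGroup H']
    [InnerProductSpace 𝕜 H'] [CompleteSpace H] [CompleteSpace H'] (v : HilbertBasis κ 𝕜 K)
    (u : HilbertBasis ι 𝕜 H) (u' : HilbertBasis ι' 𝕜 H') {V : H →ₗᵢ[𝕜] K} {W : H' →ₗᵢ[𝕜] K}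
    {f : ι → κ} {g : ι' → κ} (hfg : IsCompl (Set.range f) (Set.range g))
    (hV : ∀ i, V (u i) = v (f i)) (hW : ∀ i, W (u' i) = v (g i)) :
    V.toLinearMap.rangeᗮ = W.toLinearMap.range := by
  have hVu : V ∘ u = v ∘ f := funext hV
  have hWu : W ∘ u' = v ∘ g := funext hW
  rw [range_eq_topologicalClosure_span u, range_eq_topologicalClosure_span u', hVu, hWu,
    Submodule.orthogonal_closure, Set.range_comp, orthogonal_span_image_eq, hfg.compl_eq,
    ← Set.range_comp]

end HilbertBasis

end Hilbert

theorem im_eq_zero_of_sq_mem_spectrum {H : Type*} [NormedAddCommGroup H] [InnerProductSpace ℂ H]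
    [CompleteSpace H] {A : H →L[ℂ] H} (hA : A.IsPositive) {z : ℂ} (hz : z ^ 2 ∈ spectrum ℂ A) :
    z.im = 0 := by
  open scoped ComplexOrder in
  exact Complex.sq_nonneg_iff.mp
    (spectrum_nonneg_of_nonneg (A.nonneg_iff_isPositive.mpr hA) hz)

theorem stmt_19_general {ι H K : Type*} [NormedAddCommGroup H] [InnerProductSpace ℂ H]
    [CompleteSpace H] [NormedAddCommGroup K] [InnerProductSpace ℂ K] [CompleteSpace K]
    (u : HilbertBasis ι ℂ H) {V W : H →ₗᵢ[ℂ] K}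
    (hVW : V.toLinearMap.rangeᗮ = W.toLinearMap.range) {A : H →L[ℂ] H} {B G : K →L[ℂ] K}
    (hBV : ∀ i, B (V (u i)) = W (A (u i))) (hBW : ∀ i, B (W (u i)) = V (u i))
    (hGV : ∀ i, G (V (u i)) = W (u i)) (hGW : ∀ i, G (W (u i)) = V (u i))
    (hApos : ∀ x, (⟪A x, x⟫_ℂ).im = 0 ∧ 0 ≤ (⟪A x, x⟫_ℂ).re) :
    (∀ k : K, 0 ≤ (⟪(G ∘L B) k, k⟫_ℂ).re) ∧
    spectrum ℂ B = {z : ℂ | z ^ 2 ∈ spectrum ℂ A} ∧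
    spectrum ℂ B ⊆ {z : ℂ | z.im = 0} := by
  have B_V : B ∘L V.toContinuousLinearMap = W.toContinuousLinearMap ∘L A :=
    hilbertBasis_clm_ext u hBV
  have B_W : B ∘L W.toContinuousLinearMap = V.toContinuousLinearMap :=
    hilbertBasis_clm_ext u hBW
  have G_V : G ∘L V.toContinuousLinearMap = W.toContinuousLinearMap :=
    hilbertBasis_clm_ext u hGV
  have G_W : G ∘L W.toContinuousLinearMap = V.toContinuousLinearMap :=
    hilbertBasis_clm_ext u hGW
  have A_pos : A.IsPositive := A.isPositive_iff_complex.mpr fun x =>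
    ⟨Complex.ext (by simp) (by simpa using (hApos x).1.symm), (hApos x).2⟩
  have spectrum_B : spectrum ℂ B = {z | z ^ 2 ∈ spectrum ℂ A} :=
    spectrum_eq_of_orthogonal_range_eq hVW (DFunLike.congr_fun B_V) (DFunLike.congr_fun B_W)
  refine ⟨re_inner_swap_comp_nonneg hVW (DFunLike.congr_fun B_V) (DFunLike.congr_fun B_W)
    (DFunLike.congr_fun G_V) (DFunLike.congr_fun G_W) A_pos, spectrum_B, ?_⟩
  rw [spectrum_B]
  exact fun _ => im_eq_zero_of_sq_mem_spectrum A_pos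

section EvenOdd

open scoped lp

/-- The standard orthonormal basis of `ℓ²(ℕ, ℂ)`. -/
noncomputable def stdBasis : HilbertBasis ℕ ℂ ℓ²(ℕ, ℂ) :=
  .ofRepr (.refl ℂ _)

theorem stdBasis_apply (n : ℕ) : stdBasis n = lp.single 2 n (1 : ℂ) :=
  (stdBasis.repr_symm_single n).symm

/-- The embedding `V` of `ℓ²(ℕ, ℂ)` as the even coordinates, `e_j ↦ e_{2j}`. -/
noncomputable def evenIsometry : ℓ²(ℕ, ℂ) →ₗᵢ[ℂ] ℓ²(ℕ, ℂ) :=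
  isometryOfOrthonormal stdBasis
    (stdBasis.orthonormal.comp (2 * ·) (mul_right_injective₀ two_ne_zero))

/-- The embedding `W` of `ℓ²(ℕ, ℂ)` as the odd coordinates, `e_j ↦ e_{2j+1}`. -/
noncomputable def oddIsometry : ℓ²(ℕ, ℂ) →ₗᵢ[ℂ] ℓ²(ℕ, ℂ) :=
  isometryOfOrthonormal stdBasis
    (stdBasis.orthonormal.comp (2 * · + 1)
      ((add_left_injective 1).comp (mul_right_injective₀ two_ne_zero)))

theorem evenIsometry_stdBasis (n : ℕ) : evenIsometry (stdBasis n) = stdBasis (2 * n) :=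
  isometryOfOrthonormal_apply ..

theorem oddIsometry_stdBasis (n : ℕ) : oddIsometry (stdBasis n) = stdBasis (2 * n + 1) :=
  isometryOfOrthonormal_apply ..

theorem orthogonal_range_evenIsometry :
    evenIsometry.toLinearMap.rangeᗮ = oddIsometry.toLinearMap.range :=
  orthogonal_range_eq_range_of_isCompl stdBasis stdBasis stdBasis
    (by simpa using Nat.isCompl_even_odd)
    evenIsometry_stdBasis oddIsometry_stdBasis

end EvenOdd

/-- if moreover `A` is nonnegative (`⟨Ax, x⟩` real and `≥ 0`), then
`Re ⟨(G∘B)x, x⟩ ≥ 0` for every `x` (`B` is nonnegative in the Krein space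
`ℓ²(G)`, hence definitizable by `p(λ) = λ`), and
`spectrum B = {λ : λ² ∈ spectrum A} ⊆ ℝ`. -/
theorem stmt_19
    (b c : ℕ → ℝ)
    (hbbdd : ∃ M : ℝ, ∀ n, |b n| ≤ M) (hcbdd : ∃ M : ℝ, ∀ n, |c n| ≤ M)
    (hc : ∀ j, 0 < c j)
    (A B G : lp (fun _ : ℕ => ℂ) 2 →L[ℂ] lp (fun _ : ℕ => ℂ) 2)
    (e : ℕ → lp (fun _ : ℕ => ℂ) 2) (he : ∀ n, e n = lp.single 2 n (1 : ℂ))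
    (hA0 : A (e 0) = (b 0 : ℂ) • e 0 + (Real.sqrt (c 0) : ℂ) • e 1)
    (hA : ∀ n : ℕ, A (e (n + 1)) = (Real.sqrt (c n) : ℂ) • e n
      + (b (n + 1) : ℂ) • e (n + 1) + (Real.sqrt (c (n + 1)) : ℂ) • e (n + 2))
    (hB0 : B (e 0) = (b 0 : ℂ) • e 1 + (Real.sqrt (c 0) : ℂ) • e 3)
    (hBeven : ∀ j : ℕ, B (e (2 * (j + 1))) = (Real.sqrt (c j) : ℂ) • e (2 * j + 1)
      + (b (j + 1) : ℂ) • e (2 * j + 3) + (Real.sqrt (c (j + 1)) : ℂ) • e (2 * j + 5))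
    (hBodd : ∀ j : ℕ, B (e (2 * j + 1)) = e (2 * j))
    (hGeven : ∀ j : ℕ, G (e (2 * j)) = e (2 * j + 1))
    (hGodd : ∀ j : ℕ, G (e (2 * j + 1)) = e (2 * j))
    (hApos : ∀ x : lp (fun _ : ℕ => ℂ) 2,
      (⟪A x, x⟫_ℂ).im = 0 ∧ 0 ≤ (⟪A x, x⟫_ℂ).re) :
    (∀ x : lp (fun _ : ℕ => ℂ) 2, 0 ≤ (⟪(G ∘L B) x, x⟫_ℂ).re) ∧
    spectrum ℂ B = {z : ℂ | z ^ 2 ∈ spectrum ℂ A} ∧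
    spectrum ℂ B ⊆ {z : ℂ | z.im = 0} := by
  obtain rfl : e = stdBasis := funext fun n => (he n).trans (stdBasis_apply n).symm
  have hV := evenIsometry_stdBasis
  have hW := oddIsometry_stdBasis
  have hBV : ∀ j, B (evenIsometry (stdBasis j)) = oddIsometry (A (stdBasis j))
    | 0 => by simp [-Complex.coe_smul, hV, hW, hA0, hB0]
    | j + 1 => by simp [-Complex.coe_smul, hV, hW, hA, ← hBeven, mul_add]
  exact stmt_19_general stdBasis orthogonal_range_evenIsometry hBV (by simpa [hV, hW])
    (by simpa [hV, hW]) (by simpa [hV, hW]) hApos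
end
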